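/- arXiv:1011.4691 — 2 statements merged into one kernel-verified Lean document; each statement's English description precedes it below -/
import Mathlib

section
/- Let N ≥ 3, p > 0, α, β ∈ ℝ with N + α + p(N−2) > 0 and β < −2, γ ∈ (0,1), and let φ : (0,∞) → (0,∞) be locally γ-Hölder continuous and satisfy, for some constants c₁, c₂ > 0: c₁ r^α ≤ φ(r) ≤ c₂ r^α for all 0 < r < 1, and c₁ r^β ≤ φ(r) ≤ c₂ r^β for all r > 1. Then for every a ≥ 0 and b ≥ 0 the equation −Δu = φ(|x|) u^{−p} on ℝ^N \ {0} admits a radially symmetric C² positive solution u_{a,b} such that |x|^{N−2} u_{a,b}(x) → a as |x| → 0 and u_{a,b}(x) → b as |x| → ∞. -/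
/-!
For a radial function `u(x) = w(s)` in the Emden variable `s = |x| ^ (2 - N)`, the equation becomes
`-w'' = ψ w ^ (-p)` on `(0, ∞)`, and the two limits of `u` become `w(0) = b` and `w(s) / s → a` at
infinity. All of this is encoded in the integral equation
`w(s) = b + a s + ∫₀^∞ min(s, t) ψ(t) w(t) ^ (-p) dt`.
If `a, b > 0`, then `w ≥ b + a s` keeps the nonlinearity away from its singularity, and the equation
for `v = w / (b + a s)` reads `v - 𝒢(v) = 1` with a Lipschitz operator `𝒢` on bounded continuous
functions. Since `w ^ (-p)` is decreasing in `w`, the maximum principle makes `v ↦ v - τ 𝒢(v)`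
antilipschitz uniformly in `τ ∈ [0, 1]`, so its surjectivity propagates from `τ = 0` to `τ = 1`.
For `a, b ≥ 0` one lets `a + ε, b + ε` decrease to `a, b`: by the maximum principle the solutions
decrease, so their densities increase, and the potential of the first density bounds all of them
from below by a positive function.
-/

open Metric Set MeasureTheory Filter

noncomputable def laplacian {N : ℕ} (u : EuclideanSpace ℝ (Fin N) → ℝ)
    (x : EuclideanSpace ℝ (Fin N)) : ℝ :=
  ∑ i, iteratedFDeriv ℝ 2 u x ![EuclideanSpace.single i 1, EuclideanSpace.single i 1]

/-- A `C²` positive solution of `-Δu = φ(|x|) u^{-p}` on `ℝ^N \ {0}`. -/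
def IsSol {N : ℕ} (φ : ℝ → ℝ) (p : ℝ) (u : EuclideanSpace ℝ (Fin N) → ℝ) : Prop :=
  ContDiffOn ℝ 2 u {(0 : EuclideanSpace ℝ (Fin N))}ᶜ ∧
    ∀ x : EuclideanSpace ℝ (Fin N), x ≠ 0 →
      0 < u x ∧ -laplacian u x = φ ‖x‖ * u x ^ (-p)

open scoped NNReal BoundedContinuousFunction

section GreenPotential

/-- The Green potential `∫₀^∞ min(s, t) g(t) dt` of a density `g` on the half line: it inverts
`-d²/ds²` with a Dirichlet condition at `0` and vanishing slope at infinity. -/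
noncomputable def greenPotential (g : ℝ → ℝ) (s : ℝ) : ℝ := ∫ t in Ioi (0 : ℝ), min s t * g t

/-- The densities whose Green potential is finite: `∫₀^∞ min(1, t) |g(t)| dt < ∞`. -/
def GreenIntegrable (g : ℝ → ℝ) : Prop := IntegrableOn (fun t ↦ min 1 t * g t) (Ioi (0 : ℝ))

variable {g g₁ g₂ : ℝ → ℝ} {s t : ℝ}

lemma min_le_max_one_mul_min_one (s : ℝ) (ht : 0 ≤ t) : min s t ≤ max 1 s * min 1 t := by
  rcases le_total 1 t with h | h
  · rw [min_eq_left h, mul_one]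
    exact (min_le_left _ _).trans (le_max_right _ _)
  · rw [min_eq_right h]
    exact (min_le_right _ _).trans (le_mul_of_one_le_left ht (le_max_left _ _))

lemma norm_min_mul_le (hs : 0 ≤ s) (ht : 0 ≤ t) (y : ℝ) :
    ‖min s t * y‖ ≤ max 1 s * ‖min 1 t * y‖ := by
  rw [norm_mul, norm_mul, ← mul_assoc, Real.norm_of_nonneg (le_min hs ht),
    Real.norm_of_nonneg (le_min zero_le_one ht)]
  exact mul_le_mul_of_nonneg_right (min_le_max_one_mul_min_one s ht) (norm_nonneg y)

lemma GreenIntegrable.aestronglyMeasurable (hg : GreenIntegrable g) :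
    AEStronglyMeasurable g (volume.restrict (Ioi 0)) := by
  have hinv : Measurable fun t : ℝ ↦ (min 1 t)⁻¹ := by fun_prop
  refine (hinv.aestronglyMeasurable.mul hg.1).congr ?_
  filter_upwards [ae_restrict_mem measurableSet_Ioi] with t (ht : 0 < t)
  exact inv_mul_cancel_left₀ (lt_min one_pos ht).ne' (g t)

lemma GreenIntegrable.integrableOn_min_mul (hg : GreenIntegrable g) (hs : 0 ≤ s) :
    IntegrableOn (fun t ↦ min s t * g t) (Ioi (0 : ℝ)) := by
  have hmin : Measurable fun t : ℝ ↦ min s t := by fun_prop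
  refine Integrable.mono' (hg.norm.const_mul (max 1 s))
    (hmin.aestronglyMeasurable.mul hg.aestronglyMeasurable) ?_
  filter_upwards [ae_restrict_mem measurableSet_Ioi] with t ht
  exact norm_min_mul_le hs (le_of_lt ht) (g t)

lemma GreenIntegrable.integrableOn_Ioi (hg : GreenIntegrable g) (hs : 0 < s) :
    IntegrableOn g (Ioi s) := by
  refine (((hg.integrableOn_min_mul hs.le).mono_set (Ioi_subset_Ioi hs.le)).const_mul s⁻¹).congr ?_
  filter_upwards [ae_restrict_mem measurableSet_Ioi] with t ht
  rw [min_eq_left (le_of_lt ht), inv_mul_cancel_left₀ hs.ne']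

lemma GreenIntegrable.congr (hg : GreenIntegrable g₁) (h : EqOn g₁ g₂ (Ioi 0)) :
    GreenIntegrable g₂ :=
  IntegrableOn.congr_fun hg (fun t ht ↦ congrArg (min 1 t * ·) (h ht)) measurableSet_Ioi

lemma GreenIntegrable.sub (hg₁ : GreenIntegrable g₁) (hg₂ : GreenIntegrable g₂) :
    GreenIntegrable fun t ↦ g₁ t - g₂ t := by
  refine (Integrable.sub hg₁ hg₂).congr (Eventually.of_forall fun t ↦ ?_)
  exact (mul_sub (min 1 t) (g₁ t) (g₂ t)).symm

lemma GreenIntegrable.mul_bdd {k : ℝ → ℝ} {c : ℝ} (hg : GreenIntegrable g)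
    (hk : AEStronglyMeasurable k (volume.restrict (Ioi 0))) (hc : ∀ t, 0 < t → |k t| ≤ c) :
    GreenIntegrable fun t ↦ g t * k t := by
  refine (Integrable.mul_bdd (c := c) hg hk ?_).congr (.of_forall fun t ↦ mul_assoc _ _ _)
  filter_upwards [ae_restrict_mem measurableSet_Ioi] with t ht using hc t ht

lemma greenPotential_zero (g : ℝ → ℝ) : greenPotential g 0 = 0 := by
  refine setIntegral_eq_zero_of_forall_eq_zero fun t ht ↦ ?_
  rw [min_eq_left (le_of_lt ht), zero_mul]

lemma greenPotential_congr (h : EqOn g₁ g₂ (Ioi 0)) (s : ℝ) :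
    greenPotential g₁ s = greenPotential g₂ s :=
  setIntegral_congr_fun measurableSet_Ioi fun t ht ↦ congrArg (min s t * ·) (h ht)

lemma greenPotential_sub (hg₁ : GreenIntegrable g₁) (hg₂ : GreenIntegrable g₂) (hs : 0 ≤ s) :
    greenPotential (fun t ↦ g₁ t - g₂ t) s = greenPotential g₁ s - greenPotential g₂ s := by
  simp only [greenPotential, mul_sub]
  exact integral_sub (hg₁.integrableOn_min_mul hs) (hg₂.integrableOn_min_mul hs)

lemma greenPotential_nonneg (hg : ∀ t, 0 < t → 0 ≤ g t) (hs : 0 ≤ s) : 0 ≤ greenPotential g s :=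
  setIntegral_nonneg measurableSet_Ioi fun t ht ↦ mul_nonneg (le_min hs (le_of_lt ht)) (hg t ht)

lemma greenPotential_mono (hg₁ : GreenIntegrable g₁) (hg₂ : GreenIntegrable g₂)
    (h : ∀ t, 0 < t → g₁ t ≤ g₂ t) (hs : 0 ≤ s) : greenPotential g₁ s ≤ greenPotential g₂ s :=
  setIntegral_mono_on (hg₁.integrableOn_min_mul hs) (hg₂.integrableOn_min_mul hs) measurableSet_Ioi
    fun t ht ↦ mul_le_mul_of_nonneg_left (h t ht) (le_min hs (le_of_lt ht))

lemma greenPotential_pos (hg : GreenIntegrable g) (hpos : ∀ t, 0 < t → 0 < g t) (hs : 0 < s) :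
    0 < greenPotential g s := by
  have hkernel : ∀ t ∈ Ioi (0 : ℝ), 0 < min s t * g t := fun t ht ↦
    mul_pos (lt_min hs ht) (hpos t ht)
  refine (setIntegral_pos_iff_support_of_nonneg_ae ?_ (hg.integrableOn_min_mul hs.le)).2 ?_
  · filter_upwards [ae_restrict_mem measurableSet_Ioi] with t ht using (hkernel t ht).le
  · have hsupp : Ioi 0 ⊆ Function.support fun t ↦ min s t * g t := fun t ht ↦ (hkernel t ht).ne'
    rw [inter_eq_right.2 hsupp, Real.volume_Ioi]
    exact ENNReal.zero_lt_top

lemma abs_greenPotential_le (hg : GreenIntegrable g) (hs : 0 ≤ s) :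
    |greenPotential g s| ≤ max 1 s * ∫ t in Ioi (0 : ℝ), ‖min 1 t * g t‖ := by
  rw [← integral_const_mul, ← Real.norm_eq_abs]
  refine norm_integral_le_of_norm_le (hg.norm.const_mul _) ?_
  filter_upwards [ae_restrict_mem measurableSet_Ioi] with t ht
  exact norm_min_mul_le hs (le_of_lt ht) (g t)

lemma continuousOn_greenPotential (hg : GreenIntegrable g) :
    ContinuousOn (greenPotential g) (Ici 0) := by
  intro s₀ _
  refine continuousWithinAt_of_dominated (bound := fun t ↦ max 1 (s₀ + 1) * ‖min 1 t * g t‖)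
    ?_ ?_ (hg.norm.const_mul _) (Eventually.of_forall fun t ↦ by fun_prop)
  · filter_upwards [self_mem_nhdsWithin] with s hs using (hg.integrableOn_min_mul hs).1
  · filter_upwards [self_mem_nhdsWithin, nhdsWithin_le_nhds (Iio_mem_nhds (lt_add_one s₀))]
      with s hs hs₁
    filter_upwards [ae_restrict_mem measurableSet_Ioi] with t ht
    refine (norm_min_mul_le hs (le_of_lt ht) (g t)).trans ?_
    gcongr
    exact le_of_lt hs₁

lemma hasDerivAt_min_mul (hst : t ≠ s) :
    HasDerivAt (fun x ↦ min x t * g t) ((Ioi s).indicator g t) s := by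
  rcases hst.lt_or_gt with h | h
  · rw [indicator_of_notMem (notMem_Ioi.2 h.le)]
    refine (hasDerivAt_const s (t * g t)).congr_of_eventuallyEq ?_
    filter_upwards [Ioi_mem_nhds h] with x hx
    rw [min_eq_right (le_of_lt hx)]
  · rw [indicator_of_mem (mem_Ioi.2 h)]
    refine (hasDerivAt_mul_const (g t)).congr_of_eventuallyEq ?_
    filter_upwards [Iio_mem_nhds h] with x hx
    rw [min_eq_left (le_of_lt hx)]

lemma lipschitzOnWith_min_mul (g : ℝ → ℝ) (s t : ℝ) :
    LipschitzOnWith (Real.nnabs ((Ioi s).indicator (fun t ↦ |g t|) t)) (fun x ↦ min x t * g t)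
      (Ioi s) := by
  refine LipschitzOnWith.of_dist_le_mul fun x (hx : s < x) y (hy : s < y) ↦ ?_
  by_cases ht : s < t
  · rw [indicator_of_mem (mem_Ioi.2 ht), Real.dist_eq, Real.dist_eq, ← sub_mul, abs_mul, mul_comm,
      Real.coe_nnabs, abs_abs]
    refine mul_le_mul_of_nonneg_left ?_ (abs_nonneg _)
    exact (abs_min_sub_min_le_max x t y t).trans (by simp)
  · rw [min_eq_right ((not_lt.1 ht).trans hx.le), min_eq_right ((not_lt.1 ht).trans hy.le),
      dist_self]
    positivity

lemma hasDerivAt_greenPotential (hg : GreenIntegrable g) (hs : 0 < s) :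
    HasDerivAt (greenPotential g) (∫ t in Ioi s, g t) s := by
  have hIoi : ∀ r, 0 < r → Integrable ((Ioi r).indicator g) := fun r hr ↦
    (integrable_indicator_iff measurableSet_Ioi).2 (hg.integrableOn_Ioi hr)
  have key := hasDerivAt_integral_of_dominated_loc_of_lip (μ := volume.restrict (Ioi (0 : ℝ)))
    (F := fun s t ↦ min s t * g t) (F' := (Ioi s).indicator g) (x₀ := s) (s := Ioi (s / 2))
    (bound := (Ioi (s / 2)).indicator fun t ↦ |g t|) (𝕜 := ℝ) (Ioi_mem_nhds (half_lt_self hs))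
    ?_ (hg.integrableOn_min_mul hs.le) (hIoi s hs).1.restrict
    (Eventually.of_forall fun t ↦ lipschitzOnWith_min_mul g (s / 2) t) ?_ ?_
  · rw [← max_eq_right hs.le, ← Ioi_inter_Ioi, ← setIntegral_indicator measurableSet_Ioi,
      max_eq_right hs.le]
    exact key.2
  · filter_upwards [Ioi_mem_nhds hs] with x hx using (hg.integrableOn_min_mul (le_of_lt hx)).1
  · refine (Integrable.restrict ?_)
    exact (integrable_indicator_iff measurableSet_Ioi).2 (hg.integrableOn_Ioi (half_pos hs)).norm
  · filter_upwards [ae_restrict_of_ae (Measure.ae_ne volume s)] with t ht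
      using hasDerivAt_min_mul ht

lemma hasDerivAt_integral_Ioi (hg : GreenIntegrable g) (hgc : ContinuousOn g (Ioi 0))
    (hs : 0 < s) : HasDerivAt (fun s ↦ ∫ t in Ioi s, g t) (-g s) s := by
  have hint : IntegrableOn g (Ioi (s / 2)) := hg.integrableOn_Ioi (half_pos hs)
  have hd : HasDerivAt (fun x ↦ (∫ t in Ioi (s / 2), g t) - ∫ t in (s / 2)..x, g t) (-g s) s := by
    refine (intervalIntegral.integral_hasDerivAt_right ?_
      (hgc.stronglyMeasurableAtFilter isOpen_Ioi s hs)
      (hgc.continuousAt (Ioi_mem_nhds hs))).const_sub _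
    rw [intervalIntegrable_iff_integrableOn_Ioc_of_le (half_le_self hs.le)]
    exact hint.mono_set Ioc_subset_Ioi_self
  refine hd.congr_of_eventuallyEq ?_
  filter_upwards [Ioi_mem_nhds (half_lt_self hs)] with x hx
  exact eq_sub_of_add_eq' (intervalIntegral.integral_interval_add_Ioi hint
    (hg.integrableOn_Ioi ((half_pos hs).trans hx)))

lemma tendsto_greenPotential_div_atTop (hg : GreenIntegrable g) :
    Tendsto (fun s ↦ greenPotential g s / s) atTop (nhds 0) := by
  have hdct : Tendsto (fun s ↦ ∫ t in Ioi (0 : ℝ), min s t * g t / s) atTop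
      (nhds (∫ _ in Ioi (0 : ℝ), (0 : ℝ))) := by
    refine tendsto_integral_filter_of_dominated_convergence (fun t ↦ ‖min 1 t * g t‖) ?_ ?_
      hg.norm ?_
    · filter_upwards [eventually_ge_atTop 0] with s hs
      exact ((hg.integrableOn_min_mul hs).div_const s).1
    · filter_upwards [eventually_ge_atTop 1] with s hs
      have hs₀ : 0 < s := one_pos.trans_le hs
      filter_upwards [ae_restrict_mem measurableSet_Ioi] with t ht
      rw [norm_div, Real.norm_of_nonneg hs₀.le, div_le_iff₀' hs₀]
      simpa only [max_eq_right hs] using norm_min_mul_le hs₀.le (le_of_lt ht) (g t)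
    · refine Eventually.of_forall fun t ↦ ?_
      refine (tendsto_const_nhds.div_atTop tendsto_id : Tendsto (fun s ↦ t * g t / s) _ _).congr' ?_
      filter_upwards [eventually_ge_atTop t] with s hs
      rw [min_eq_right hs]
  simpa only [greenPotential, integral_div, integral_zero] using hdct

variable {u : ℕ → ℝ → ℝ}

lemma GreenIntegrable.of_tendsto (hu : ∀ n, GreenIntegrable (u n))
    (hu₀ : ∀ n t, 0 < t → 0 ≤ u n t)
    (hlim : ∀ t, 0 < t → Tendsto (fun n ↦ u n t) atTop (nhds (g t))) {C : ℝ}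
    (hC : ∀ n, greenPotential (u n) 1 ≤ C) : GreenIntegrable g := by
  refine integrable_of_tendsto (G := fun n t ↦ min 1 t * u n t) ?_ (fun n ↦ (hu n).1) ?_
  · filter_upwards [ae_restrict_mem measurableSet_Ioi] with t ht using (hlim t ht).const_mul _
  · refine ne_top_of_le_ne_top ENNReal.ofReal_ne_top (b := ENNReal.ofReal C)
      (liminf_le_of_frequently_le' (Frequently.of_forall fun n ↦ ?_))
    refine (lintegral_congr_ae ?_).trans_le ((ofReal_integral_eq_lintegral_ofReal (hu n) ?_).symm
      |>.trans_le (ENNReal.ofReal_le_ofReal (hC n)))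
    all_goals
      filter_upwards [ae_restrict_mem measurableSet_Ioi] with t ht
      have hnonneg : 0 ≤ min 1 t * u n t :=
        mul_nonneg (le_min zero_le_one (le_of_lt ht)) (hu₀ n t ht)
    · exact Real.enorm_of_nonneg hnonneg
    · exact hnonneg

lemma tendsto_greenPotential_of_monotone (hu : ∀ n, GreenIntegrable (u n))
    (hg : GreenIntegrable g) (hmono : ∀ t, 0 < t → Monotone fun n ↦ u n t)
    (hlim : ∀ t, 0 < t → Tendsto (fun n ↦ u n t) atTop (nhds (g t))) (hs : 0 ≤ s) :
    Tendsto (fun n ↦ greenPotential (u n) s) atTop (nhds (greenPotential g s)) := by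
  refine integral_tendsto_of_tendsto_of_monotone (fun n ↦ (hu n).integrableOn_min_mul hs)
    (hg.integrableOn_min_mul hs) ?_ ?_
  · filter_upwards [ae_restrict_mem measurableSet_Ioi] with t ht
    exact (hmono t ht).const_mul (le_min hs (le_of_lt ht))
  · filter_upwards [ae_restrict_mem measurableSet_Ioi] with t ht using (hlim t ht).const_mul _

end GreenPotential

section MaximumPrinciple

lemma exists_last_nonpos {q : ℝ → ℝ} {a b : ℝ} (hab : a ≤ b) (hq : ContinuousOn q (Icc a b))
    (ha : q a ≤ 0) (hb : 0 < q b) : ∃ c ∈ Ico a b, q c ≤ 0 ∧ ∀ x ∈ Ioc c b, 0 < q x := by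
  have hcompact : IsCompact (Icc a b ∩ q ⁻¹' Iic 0) :=
    isCompact_Icc.of_isClosed_subset (hq.preimage_isClosed_of_isClosed isClosed_Icc isClosed_Iic)
      inter_subset_left
  obtain ⟨c, ⟨hc, hqc⟩, hlast⟩ := hcompact.exists_isGreatest ⟨a, left_mem_Icc.2 hab, ha⟩
  refine ⟨c, ⟨hc.1, hc.2.lt_of_ne ?_⟩, hqc, fun x hx ↦ not_le.1 fun hqx ↦ ?_⟩
  · rintro rfl
    exact hb.not_ge hqc
  · exact hx.1.not_ge (hlast ⟨⟨hc.1.trans hx.1.le, hx.2⟩, hqx⟩)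

lemma exists_isLocalMax_of_lt {F : ℝ → ℝ} {a b s₀ : ℝ} (hF : ContinuousOn F (Icc a b))
    (hs₀ : s₀ ∈ Icc a b) (ha : F a < F s₀) (hb : F b < F s₀) :
    ∃ s ∈ Ioo a b, IsLocalMax F s ∧ F s₀ ≤ F s := by
  obtain ⟨s, hs, hmax⟩ := isCompact_Icc.exists_isMaxOn ⟨s₀, hs₀⟩ hF
  have hle : F s₀ ≤ F s := hmax hs₀
  have hsa : a ≠ s := fun h ↦ (h ▸ ha).not_ge hle
  have hsb : s ≠ b := fun h ↦ (h ▸ hb).not_ge hle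
  have hmem : s ∈ Ioo a b := ⟨hs.1.lt_of_ne hsa, hs.2.lt_of_ne hsb⟩
  exact ⟨s, hmem, hmax.isLocalMax (Icc_mem_nhds hmem.1 hmem.2), hle⟩

-- If `q` were positive somewhere, a line of small slope `ε` would touch `q` from above at some `m`.
-- Going back from `m` the slope of `q` only decreases, so `q m ≤ ε * m`: a contradiction.
lemma nonpos_of_convex_where_pos {q q' : ℝ → ℝ} (hq : ContinuousOn q (Ici 0)) (hq₀ : q 0 ≤ 0)
    (hderiv : ∀ s, 0 < s → HasDerivAt q (q' s) s)
    (hconvex : ∀ s t, 0 < s → s ≤ t → (∀ x ∈ Icc s t, 0 < q x) → q' s ≤ q' t)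
    (hgrowth : ∀ ε > 0, ∀ᶠ s in atTop, q s ≤ ε * s) {s : ℝ} (hs : 0 ≤ s) : q s ≤ 0 := by
  by_contra! hpos
  have hs₀ : 0 < s := hs.lt_of_ne (by rintro rfl; exact hpos.not_ge hq₀)
  set ε := q s / (2 * s) with hε
  have hε₀ : 0 < ε := by positivity
  have hεs : ε * s < q s := by
    rw [hε]
    field_simp
    norm_num
  obtain ⟨S, hS, hsS⟩ := ((hgrowth ε hε₀).and (eventually_ge_atTop s)).exists
  obtain ⟨m, hm, hmax, hle⟩ := exists_isLocalMax_of_lt (F := fun x ↦ q x - ε * x)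
    ((hq.mono Icc_subset_Ici_self).sub (by fun_prop)) ⟨hs, hsS⟩
    (show q 0 - ε * 0 < q s - ε * s by linarith) (show q S - ε * S < q s - ε * s by linarith)
  have hslope : q' m = ε := by
    have hcrit := hmax.hasDerivAt_eq_zero ((hderiv m hm.1).sub ((hasDerivAt_id m).const_mul ε))
    linarith
  have habove : ε * m < q m := by linarith
  obtain ⟨c, hc, hqc, hqpos⟩ := exists_last_nonpos hm.1.le (hq.mono Icc_subset_Ici_self) hq₀
    ((mul_pos hε₀ hm.1).trans habove)
  obtain ⟨ξ, hξ, hξ'⟩ := exists_hasDerivAt_eq_slope q q' hc.2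
    (hq.mono fun x hx ↦ hc.1.trans hx.1) fun x hx ↦ hderiv x (hc.1.trans_lt hx.1)
  have hsteep : q' ξ ≤ ε := hslope ▸ hconvex ξ m (hc.1.trans_lt hξ.1) hξ.2.le
    fun x hx ↦ hqpos x ⟨hξ.1.trans_le hx.1, hx.2⟩
  rw [hξ', div_le_iff₀ (sub_pos.2 hc.2)] at hsteep
  linarith [mul_nonneg hε₀.le hc.1]

lemma greenPotential_le_of_nonpos_where_lt {g : ℝ → ℝ} {c₀ c₁ s : ℝ} (hg : GreenIntegrable g)
    (hc₀ : 0 ≤ c₀) (hc₁ : 0 ≤ c₁)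
    (hneg : ∀ t, 0 < t → c₀ + c₁ * t < greenPotential g t → g t ≤ 0) (hs : 0 ≤ s) :
    greenPotential g s ≤ c₀ + c₁ * s := by
  refine sub_nonpos.1 (nonpos_of_convex_where_pos
    (q := fun s ↦ greenPotential g s - (c₀ + c₁ * s)) (q' := fun s ↦ (∫ t in Ioi s, g t) - c₁)
    ((continuousOn_greenPotential hg).sub (by fun_prop)) ?_ (fun t ht ↦ ?_)
    (fun x y hx hxy hpos ↦ ?_) (fun ε hε ↦ ?_) hs)
  · simpa only [greenPotential_zero, mul_zero, add_zero, zero_sub, neg_nonpos] using hc₀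
  · exact (hasDerivAt_greenPotential hg ht).sub ((hasDerivAt_const_mul c₁).const_add c₀)
  · have hsplit := intervalIntegral.integral_interval_add_Ioi (hg.integrableOn_Ioi hx)
      (hg.integrableOn_Ioi (hx.trans_le hxy))
    have hle : ∫ t in x..y, g t ≤ 0 := by
      rw [intervalIntegral.integral_of_le hxy]
      exact setIntegral_nonpos measurableSet_Ioc fun t ht ↦
        hneg t (hx.trans ht.1) (sub_pos.1 (hpos t (Ioc_subset_Icc_self ht)))
    linarith
  · filter_upwards [(tendsto_greenPotential_div_atTop hg).eventually_lt_const hε,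
      eventually_gt_atTop 0] with t ht ht₀
    rw [div_lt_iff₀ ht₀] at ht
    linarith [mul_nonneg hc₁ ht₀.le]

end MaximumPrinciple

section Continuation

variable {E : Type*} [NormedAddCommGroup E] [NormedSpace ℝ E] {A : E → E} {K C : ℝ≥0}

lemma surjective_sub_add_smul [CompleteSpace E] (hA : LipschitzWith K A) {l δ : ℝ}
    (hl : AntilipschitzWith C fun x ↦ x - l • A x) (hsurj : Function.Surjective fun x ↦ x - l • A x)
    (hδ : ‖δ‖₊ * (K * C) < 1) : Function.Surjective fun x ↦ x - (l + δ) • A x := by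
  intro z
  obtain ⟨S, hS⟩ := hsurj.hasRightInverse
  have hlip : LipschitzWith (‖δ‖₊ * (K * C)) fun y ↦ δ • A (S y) :=
    (lipschitzWith_smul δ).comp (hA.comp (hl.to_rightInverse hS))
  have hcontract : ContractingWith (‖δ‖₊ * (K * C)) fun y ↦ z + δ • A (S y) :=
    ⟨hδ, by simpa only [zero_add] using (LipschitzWith.const z).add hlip⟩
  obtain ⟨y, hy⟩ : ∃ y, z + δ • A (S y) = y := ⟨_, hcontract.fixedPoint_isFixedPt⟩
  refine ⟨S y, ?_⟩
  have hSy : S y - l • A (S y) = y := hS y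
  beta_reduce
  rw [add_smul, ← sub_sub, hSy, sub_eq_iff_eq_add, hy]

theorem surjective_sub_of_antilipschitzWith [CompleteSpace E] (hA : LipschitzWith K A)
    (hC : ∀ l ∈ Icc (0 : ℝ) 1, AntilipschitzWith C fun x ↦ x - l • A x) :
    Function.Surjective fun x ↦ x - A x := by
  obtain ⟨n, hn⟩ := exists_nat_gt (K * C)
  have hn₀ : (0 : ℝ≥0) < n := pos_of_gt hn
  have hn₁ : (0 : ℝ) < n := mod_cast hn₀
  have hstep : ∀ k ≤ n, Function.Surjective fun x ↦ x - ((k : ℝ) / n) • A x := by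
    intro k hk
    induction k with
    | zero => exact fun z ↦ ⟨z, by simp⟩
    | succ k ih =>
      have hkn : (k : ℝ) / n ∈ Icc (0 : ℝ) 1 :=
        ⟨by positivity, div_le_one_of_le₀ (mod_cast (Nat.le_of_succ_le hk)) hn₁.le⟩
      rw [Nat.cast_succ, add_div]
      refine surjective_sub_add_smul hA (hC _ hkn) (ih (Nat.le_of_succ_le hk)) ?_
      rw [nnnorm_div, nnnorm_one, Real.nnnorm_natCast, one_div_mul_eq_div, div_lt_one hn₀]
      exact hn
  simpa only [div_self hn₁.ne', one_smul] using hstep n le_rfl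

end Continuation

section PositiveData

variable {a b s : ℝ} {g g₁ g₂ ρ f : ℝ → ℝ} {K : ℝ≥0}

/-- The weight `b + a s` of the sup norm in which the Green equation is solved, extended to
negative `s` by the constant `b`. -/
def affineWeight (a b s : ℝ) : ℝ := b + a * max s 0

lemma continuous_affineWeight (a b : ℝ) : Continuous (affineWeight a b) := by
  unfold affineWeight
  fun_prop

lemma affineWeight_of_nonneg (a b : ℝ) (hs : 0 ≤ s) : affineWeight a b s = b + a * s := by
  rw [affineWeight, max_eq_left hs]

lemma affineWeight_pos (ha : 0 ≤ a) (hb : 0 < b) (s : ℝ) : 0 < affineWeight a b s :=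
  add_pos_of_pos_of_nonneg hb (mul_nonneg ha (le_max_right s 0))

lemma min_mul_max_le_affineWeight (ha : 0 ≤ a) (hb : 0 ≤ b) (s : ℝ) :
    min a b * max 1 (max s 0) ≤ affineWeight a b s := by
  have hs : 0 ≤ max s 0 := le_max_right s 0
  rcases le_total 1 (max s 0) with h | h
  · rw [max_eq_right h]
    exact (mul_le_mul_of_nonneg_right (min_le_left a b) hs).trans (le_add_of_nonneg_left hb)
  · rw [max_eq_left h, mul_one]
    exact (min_le_right a b).trans (le_add_of_nonneg_right (mul_nonneg ha hs))

lemma abs_greenPotential_div_affineWeight_le (ha : 0 < a) (hb : 0 < b) (hg : GreenIntegrable g)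
    (s : ℝ) : |greenPotential g (max s 0) / affineWeight a b s| ≤
      (∫ t in Ioi (0 : ℝ), ‖min 1 t * g t‖) / min a b := by
  have hweight := affineWeight_pos ha.le hb s
  have hI : 0 ≤ ∫ t in Ioi (0 : ℝ), ‖min 1 t * g t‖ := integral_nonneg fun _ ↦ norm_nonneg _
  rw [abs_div, abs_of_pos hweight, div_le_div_iff₀ hweight (lt_min ha hb)]
  calc |greenPotential g (max s 0)| * min a b
      ≤ (max 1 (max s 0) * ∫ t in Ioi (0 : ℝ), ‖min 1 t * g t‖) * min a b :=
        mul_le_mul_of_nonneg_right (abs_greenPotential_le hg (le_max_right s 0))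
          (le_min ha.le hb.le)
    _ = (∫ t in Ioi (0 : ℝ), ‖min 1 t * g t‖) * (min a b * max 1 (max s 0)) := by ring
    _ ≤ (∫ t in Ioi (0 : ℝ), ‖min 1 t * g t‖) * affineWeight a b s :=
        mul_le_mul_of_nonneg_left (min_mul_max_le_affineWeight ha.le hb.le s) hI

/-- The Green potential of `g` divided by the weight `b + a s`, as a bounded continuous function
(on all of `ℝ`, extended by its value at `0` on the negative half line). -/
noncomputable def weightedGreen (ha : 0 < a) (hb : 0 < b) (hg : GreenIntegrable g) : ℝ →ᵇ ℝ :=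
  BoundedContinuousFunction.ofNormedAddCommGroup
    (fun s ↦ greenPotential g (max s 0) / affineWeight a b s)
    (((continuousOn_greenPotential hg).comp_continuous (by fun_prop) fun s ↦ le_max_right s 0).div
      (continuous_affineWeight a b) fun s ↦ (affineWeight_pos ha.le hb s).ne')
    ((∫ t in Ioi (0 : ℝ), ‖min 1 t * g t‖) / min a b)
    (abs_greenPotential_div_affineWeight_le ha hb hg)

lemma norm_weightedGreen_le (ha : 0 < a) (hb : 0 < b) (hg : GreenIntegrable g) :
    ‖weightedGreen ha hb hg‖ ≤ (∫ t in Ioi (0 : ℝ), ‖min 1 t * g t‖) / min a b :=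
  (BoundedContinuousFunction.norm_le (div_nonneg (integral_nonneg fun _ ↦ norm_nonneg _)
    (le_min ha.le hb.le))).2 (abs_greenPotential_div_affineWeight_le ha hb hg)

lemma affineWeight_mul_weightedGreen (ha : 0 < a) (hb : 0 < b) (hg : GreenIntegrable g) (s : ℝ) :
    affineWeight a b s * weightedGreen ha hb hg s = greenPotential g (max s 0) :=
  mul_div_cancel₀ _ (affineWeight_pos ha.le hb s).ne'

lemma weightedGreen_sub (ha : 0 < a) (hb : 0 < b) (hg₁ : GreenIntegrable g₁)
    (hg₂ : GreenIntegrable g₂) :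
    weightedGreen ha hb (hg₁.sub hg₂) = weightedGreen ha hb hg₁ - weightedGreen ha hb hg₂ := by
  ext s
  exact (congrArg (· / _) (greenPotential_sub hg₁ hg₂ (le_max_right s 0))).trans (sub_div _ _ _)

lemma weightedGreen_le_of_nonpos_where_lt (ha : 0 < a) (hb : 0 < b) (hg : GreenIntegrable g)
    {δ : ℝ} (hδ : 0 ≤ δ) (hneg : ∀ t, 0 < t → δ < weightedGreen ha hb hg t → g t ≤ 0) (s : ℝ) :
    weightedGreen ha hb hg s ≤ δ := by
  refine le_of_mul_le_mul_left ?_ (affineWeight_pos ha.le hb s)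
  rw [affineWeight_mul_weightedGreen, affineWeight]
  refine (greenPotential_le_of_nonpos_where_lt hg (mul_nonneg hb.le hδ) (mul_nonneg ha.le hδ)
    (fun t ht hlt ↦ hneg t ht ?_) (le_max_right s 0)).trans_eq (by ring)
  refine lt_of_mul_lt_mul_left ?_ (affineWeight_pos ha.le hb t).le
  rw [affineWeight_mul_weightedGreen, affineWeight, max_eq_left ht.le]
  linarith

lemma GreenIntegrable.mul_boundedContinuous (hρ : GreenIntegrable ρ) (v : ℝ →ᵇ ℝ) :
    GreenIntegrable fun t ↦ ρ t * v t :=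
  hρ.mul_bdd v.continuous.aestronglyMeasurable fun t _ ↦ v.norm_coe_le_norm t

/-- The operator `v ↦ (b + a s)⁻¹ ∫₀^∞ min(s, t) ρ(t) f(v(t)) dt` on bounded continuous functions,
for a Lipschitz nonlinearity `f`. -/
noncomputable def nonlinearGreen (ha : 0 < a) (hb : 0 < b) (hρ : GreenIntegrable ρ)
    (hf : LipschitzWith K f) (v : ℝ →ᵇ ℝ) : ℝ →ᵇ ℝ :=
  weightedGreen ha hb (hρ.mul_boundedContinuous (v.comp f hf))

lemma lipschitzWith_nonlinearGreen (ha : 0 < a) (hb : 0 < b) (hρ : GreenIntegrable ρ)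
    (hf : LipschitzWith K f) :
    LipschitzWith (Real.toNNReal ((∫ t in Ioi (0 : ℝ), ‖min 1 t * ρ t‖) / min a b) * K)
      (nonlinearGreen ha hb hρ hf) := by
  have hc : 0 < min a b := lt_min ha hb
  refine LipschitzWith.of_dist_le_mul fun v₁ v₂ ↦ ?_
  rw [dist_eq_norm, nonlinearGreen, nonlinearGreen, ← weightedGreen_sub, NNReal.coe_mul,
    Real.coe_toNNReal _ (div_nonneg (integral_nonneg fun _ ↦ norm_nonneg _) hc.le), mul_assoc,
    div_mul_eq_mul_div, ← integral_mul_const]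
  refine (norm_weightedGreen_le ha hb _).trans (div_le_div_of_nonneg_right ?_ hc.le)
  refine integral_mono_of_nonneg (Eventually.of_forall fun _ ↦ norm_nonneg _)
    (Integrable.mul_const hρ.norm _) (Eventually.of_forall fun t ↦ ?_)
  simp only [BoundedContinuousFunction.comp_apply]
  rw [← mul_sub, ← mul_assoc, norm_mul, ← dist_eq_norm]
  gcongr
  exact (hf.dist_le_mul _ _).trans (by gcongr; exact BoundedContinuousFunction.dist_coe_le_dist t)

lemma mul_nonlinearGreen_sub_le (ha : 0 < a) (hb : 0 < b) (hρ : GreenIntegrable ρ)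
    (hρ₀ : ∀ t, 0 < t → 0 ≤ ρ t) (hf : LipschitzWith K f) (hanti : Antitone f) {l : ℝ}
    (hl : 0 ≤ l) (v₁ v₂ : ℝ →ᵇ ℝ) (s : ℝ) :
    l * (nonlinearGreen ha hb hρ hf v₁ s - nonlinearGreen ha hb hρ hf v₂ s) ≤
      dist (v₁ - l • nonlinearGreen ha hb hρ hf v₁) (v₂ - l • nonlinearGreen ha hb hρ hf v₂) := by
  set δ := dist (v₁ - l • nonlinearGreen ha hb hρ hf v₁) (v₂ - l • nonlinearGreen ha hb hρ hf v₂)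
    with hδ
  have hsub := weightedGreen_sub ha hb (hρ.mul_boundedContinuous (v₁.comp f hf))
    (hρ.mul_boundedContinuous (v₂.comp f hf))
  rcases hl.eq_or_lt with rfl | hl
  · rw [zero_mul]
    exact dist_nonneg
  rw [← le_div_iff₀' hl, nonlinearGreen, nonlinearGreen, ← BoundedContinuousFunction.sub_apply,
    ← hsub]
  refine weightedGreen_le_of_nonpos_where_lt ha hb _ (by positivity) (fun t ht hlt ↦ ?_) s
  rw [hsub, BoundedContinuousFunction.sub_apply, div_lt_iff₀' hl] at hlt
  have hclose : -δ ≤ (v₁ t - l * nonlinearGreen ha hb hρ hf v₁ t) -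
      (v₂ t - l * nonlinearGreen ha hb hρ hf v₂ t) :=
    neg_le_of_abs_le <| BoundedContinuousFunction.dist_coe_le_dist
      (f := v₁ - l • nonlinearGreen ha hb hρ hf v₁)
      (g := v₂ - l • nonlinearGreen ha hb hρ hf v₂) t
  have hle : v₂ t ≤ v₁ t := by
    unfold nonlinearGreen at hclose
    linarith
  exact sub_nonpos.2 (mul_le_mul_of_nonneg_left (hanti hle) (hρ₀ t ht))

lemma antilipschitzWith_sub_smul_nonlinearGreen (ha : 0 < a) (hb : 0 < b)
    (hρ : GreenIntegrable ρ) (hρ₀ : ∀ t, 0 < t → 0 ≤ ρ t) (hf : LipschitzWith K f)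
    (hanti : Antitone f) {l : ℝ} (hl : 0 ≤ l) :
    AntilipschitzWith 2 fun v ↦ v - l • nonlinearGreen ha hb hρ hf v := by
  refine AntilipschitzWith.of_le_mul_dist fun v₁ v₂ ↦ ?_
  refine (BoundedContinuousFunction.dist_le (by positivity)).2 fun s ↦ ?_
  have h₁₂ := mul_nonlinearGreen_sub_le ha hb hρ hρ₀ hf hanti hl v₁ v₂ s
  have h₂₁ := mul_nonlinearGreen_sub_le ha hb hρ hρ₀ hf hanti hl v₂ v₁ s
  have hclose := abs_le.1 <| BoundedContinuousFunction.dist_coe_le_dist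
    (f := v₁ - l • nonlinearGreen ha hb hρ hf v₁)
    (g := v₂ - l • nonlinearGreen ha hb hρ hf v₂) s
  rw [dist_comm] at h₂₁
  simp only [BoundedContinuousFunction.sub_apply, BoundedContinuousFunction.smul_apply,
    smul_eq_mul] at hclose
  rw [Real.dist_eq, abs_le, NNReal.coe_ofNat]
  constructor <;> linarith [hclose.1, hclose.2]

theorem exists_eq_add_greenPotential_comp (ha : 0 < a) (hb : 0 < b) (hρ : GreenIntegrable ρ)
    (hρ₀ : ∀ t, 0 < t → 0 ≤ ρ t) (hf : LipschitzWith K f) (hanti : Antitone f) :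
    ∃ v : ℝ →ᵇ ℝ, GreenIntegrable (fun t ↦ ρ t * f (v t)) ∧ ∀ s, 0 ≤ s →
      (b + a * s) * v s = b + a * s + greenPotential (fun t ↦ ρ t * f (v t)) s := by
  obtain ⟨v, hv⟩ := surjective_sub_of_antilipschitzWith (lipschitzWith_nonlinearGreen ha hb hρ hf)
    (fun l hl ↦ antilipschitzWith_sub_smul_nonlinearGreen ha hb hρ hρ₀ hf hanti hl.1) 1
  have hint := hρ.mul_boundedContinuous (v.comp f hf)
  refine ⟨v, hint, fun s hs ↦ ?_⟩
  have hvs : v s = 1 + weightedGreen ha hb hint s :=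
    sub_eq_iff_eq_add.1 (DFunLike.congr_fun hv s)
  rw [hvs, mul_one_add, ← affineWeight_of_nonneg a b hs, affineWeight_mul_weightedGreen,
    max_eq_left hs]
  rfl

end PositiveData

section SingularEquation

variable {p a b s : ℝ} {ψ w : ℝ → ℝ}

lemma antitone_max_one_rpow_neg (hp : 0 ≤ p) : Antitone fun x : ℝ ↦ max x 1 ^ (-p) :=
  fun _ _ hxy ↦ Real.rpow_le_rpow_of_nonpos (one_pos.trans_le (le_max_right _ _))
    (max_le_max_right 1 hxy) (neg_nonpos.2 hp)

lemma lipschitzWith_max_one_rpow_neg (hp : 0 ≤ p) :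
    LipschitzWith (Real.toNNReal p) fun x : ℝ ↦ max x 1 ^ (-p) := by
  have hIci : LipschitzOnWith (Real.toNNReal p) (fun x : ℝ ↦ x ^ (-p)) (Ici 1) := by
    refine (convex_Ici 1).lipschitzOnWith_of_nnnorm_hasDerivWithin_le
      (fun x (hx : 1 ≤ x) ↦ (Real.hasDerivAt_rpow_const
        (Or.inl (one_pos.trans_le hx).ne')).hasDerivWithinAt) fun x (hx : 1 ≤ x) ↦ ?_
    rw [← NNReal.coe_le_coe, coe_nnnorm, Real.coe_toNNReal p hp, norm_mul, norm_neg,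
      Real.norm_of_nonneg hp, Real.norm_of_nonneg (Real.rpow_nonneg (zero_le_one.trans hx) _)]
    exact mul_le_of_le_one_right hp (Real.rpow_le_one_of_one_le_of_nonpos hx (by linarith))
  refine lipschitzOnWith_univ.1 ?_
  simpa only [mul_one, Function.comp_def, id_eq] using hIci.comp
    ((LipschitzWith.id.max_const 1).lipschitzOnWith (s := univ)) fun x _ ↦ le_max_right x 1

lemma GreenIntegrable.mul_affineWeight_rpow (hp : 0 ≤ p)
    (hψ : GreenIntegrable fun t ↦ ψ t * max 1 t ^ (-p)) (ha : 0 < a) (hb : 0 < b) :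
    GreenIntegrable fun t ↦ ψ t * affineWeight a b t ^ (-p) := by
  have hone : ∀ t : ℝ, 0 < max 1 t := fun t ↦ one_pos.trans_le (le_max_left 1 t)
  have hmeas := (continuous_affineWeight a b).measurable
  refine (hψ.mul_bdd (k := fun t ↦ (affineWeight a b t / max 1 t) ^ (-p)) (c := min a b ^ (-p))
    (Measurable.aestronglyMeasurable (by fun_prop)) fun t ht ↦ ?_).congr fun t _ ↦ ?_
  · rw [abs_of_nonneg (Real.rpow_nonneg (div_pos (affineWeight_pos ha.le hb t) (hone t)).le _)]
    refine Real.rpow_le_rpow_of_nonpos (lt_min ha hb) ?_ (neg_nonpos.2 hp)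
    simpa only [le_div_iff₀ (hone t), max_eq_left ht.le]
      using min_mul_max_le_affineWeight ha.le hb.le t
  · beta_reduce
    rw [mul_assoc, ← Real.mul_rpow (hone t).le
      (div_pos (affineWeight_pos ha.le hb t) (hone t)).le, mul_div_cancel₀ _ (hone t).ne']

/-- `w` is a positive solution on the half line of `w = b + a s + ∫₀^∞ min(s, t) ψ(t) w(t)^{-p} dt`,
the integrated form of `-w'' = ψ w^{-p}` with `w → b` at `0` and `w / s → a` at infinity. -/
structure IsGreenSolution (p : ℝ) (ψ : ℝ → ℝ) (a b : ℝ) (w : ℝ → ℝ) : Prop where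
  greenIntegrable : GreenIntegrable fun t ↦ ψ t * w t ^ (-p)
  pos : ∀ s, 0 < s → 0 < w s
  eq_add : ∀ s, 0 < s → w s = b + a * s + greenPotential (fun t ↦ ψ t * w t ^ (-p)) s

theorem exists_isGreenSolution_of_pos (hp : 0 ≤ p) (hψ₀ : ∀ t, 0 < t → 0 ≤ ψ t)
    (hψ : GreenIntegrable fun t ↦ ψ t * max 1 t ^ (-p)) (ha : 0 < a) (hb : 0 < b) :
    ∃ w, IsGreenSolution p ψ a b w := by
  have hρ₀ : ∀ t, 0 < t → 0 ≤ ψ t * affineWeight a b t ^ (-p) := fun t ht ↦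
    mul_nonneg (hψ₀ t ht) (Real.rpow_nonneg (affineWeight_pos ha.le hb t).le _)
  obtain ⟨v, hint, hv⟩ := exists_eq_add_greenPotential_comp ha hb
    (hψ.mul_affineWeight_rpow hp ha hb) hρ₀ (lipschitzWith_max_one_rpow_neg hp)
    (antitone_max_one_rpow_neg hp)
  have hweight : ∀ s, 0 ≤ s → 0 < b + a * s := fun s hs ↦ by positivity
  have hv₁ : ∀ s, 0 ≤ s → 1 ≤ v s := fun s hs ↦ by
    refine le_of_mul_le_mul_left ?_ (hweight s hs)
    rw [hv s hs, mul_one]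
    exact le_add_of_nonneg_right (greenPotential_nonneg (fun t ht ↦ mul_nonneg (hρ₀ t ht)
      (Real.rpow_nonneg (zero_le_one.trans (le_max_right _ _)) _)) hs)
  have hdensity : EqOn (fun t ↦ ψ t * affineWeight a b t ^ (-p) * max (v t) 1 ^ (-p))
      (fun t ↦ ψ t * ((b + a * t) * v t) ^ (-p)) (Ioi 0) := fun t ht ↦ by
    have ht₀ : 0 ≤ t := le_of_lt ht
    beta_reduce
    rw [affineWeight_of_nonneg a b ht₀, max_eq_left (hv₁ t ht₀), mul_assoc,
      Real.mul_rpow (hweight t ht₀).le (zero_le_one.trans (hv₁ t ht₀))]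
  refine ⟨fun s ↦ (b + a * s) * v s, hint.congr hdensity,
    fun s hs ↦ mul_pos (hweight s hs.le) (one_pos.trans_le (hv₁ s hs.le)), fun s hs ↦ ?_⟩
  rw [← greenPotential_congr hdensity]
  exact hv s hs.le

namespace IsGreenSolution

lemma density_mono (hp : 0 ≤ p) (hψ₀ : ∀ t, 0 < t → 0 ≤ ψ t) {w₁ w₂ : ℝ → ℝ} {t : ℝ}
    (ht : 0 < t) (hw₂ : 0 < w₂ t) (hle : w₂ t ≤ w₁ t) :
    ψ t * w₁ t ^ (-p) ≤ ψ t * w₂ t ^ (-p) :=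
  mul_le_mul_of_nonneg_left (Real.rpow_le_rpow_of_nonpos hw₂ hle (neg_nonpos.2 hp)) (hψ₀ t ht)

lemma le_of_le (hp : 0 ≤ p) (hψ₀ : ∀ t, 0 < t → 0 ≤ ψ t) {a₁ a₂ b₁ b₂ : ℝ} {w₁ w₂ : ℝ → ℝ}
    (h₁ : IsGreenSolution p ψ a₁ b₁ w₁) (h₂ : IsGreenSolution p ψ a₂ b₂ w₂) (ha : a₁ ≤ a₂)
    (hb : b₁ ≤ b₂) (hs : 0 < s) : w₁ s ≤ w₂ s := by
  have hdiff : ∀ t, 0 < t → w₁ t - w₂ t = greenPotential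
      (fun t ↦ ψ t * w₁ t ^ (-p) - ψ t * w₂ t ^ (-p)) t - (b₂ - b₁ + (a₂ - a₁) * t) := by
    intro t ht
    rw [greenPotential_sub h₁.greenIntegrable h₂.greenIntegrable ht.le, h₁.eq_add t ht,
      h₂.eq_add t ht]
    ring
  have hmax := greenPotential_le_of_nonpos_where_lt
    (h₁.greenIntegrable.sub h₂.greenIntegrable) (sub_nonneg.2 hb) (sub_nonneg.2 ha)
    (fun t ht hlt ↦ sub_nonpos.2 (density_mono hp hψ₀ ht (h₂.pos t ht)
      (by linarith [hdiff t ht]))) hs.le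
  linarith [hdiff s hs]

end IsGreenSolution

section MonotoneLimit

variable {A B : ℕ → ℝ} {W : ℕ → ℝ → ℝ}

lemma exists_pos_tendsto_of_antitone_isGreenSolution (hp : 0 ≤ p) (hψ₀ : ∀ t, 0 < t → 0 < ψ t)
    (hW : ∀ n, IsGreenSolution p ψ (A n) (B n) (W n)) (hA₀ : ∀ n, 0 ≤ A n) (hB₀ : ∀ n, 0 ≤ B n)
    (hanti : ∀ s, 0 < s → Antitone fun n ↦ W n s) :
    ∃ w : ℝ → ℝ, ∀ s, 0 < s → 0 < w s ∧ Tendsto (fun n ↦ W n s) atTop (nhds (w s)) := by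
  set m := greenPotential fun t ↦ ψ t * W 0 t ^ (-p)
  have hm : ∀ s, 0 < s → 0 < m s := fun s hs ↦
    greenPotential_pos (hW 0).greenIntegrable
      (fun t ht ↦ mul_pos (hψ₀ t ht) (Real.rpow_pos_of_pos ((hW 0).pos t ht) _)) hs
  have hmW : ∀ s, 0 < s → ∀ n, m s ≤ W n s := fun s hs n ↦ by
    have hmono := greenPotential_mono (hW 0).greenIntegrable (hW n).greenIntegrable
      (fun t ht ↦ IsGreenSolution.density_mono hp (fun t ht ↦ (hψ₀ t ht).le) ht ((hW n).pos t ht)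
        (hanti t ht n.zero_le)) hs.le
    rw [(hW n).eq_add s hs]
    exact hmono.trans (le_add_of_nonneg_left (add_nonneg (hB₀ n) (mul_nonneg (hA₀ n) hs.le)))
  refine ⟨fun s ↦ ⨅ n, W n s, fun s hs ↦ ⟨(hm s hs).trans_le (le_ciInf (hmW s hs)), ?_⟩⟩
  exact tendsto_atTop_ciInf (hanti s hs) ⟨m s, forall_mem_range.2 (hmW s hs)⟩

lemma IsGreenSolution.of_antitone_tendsto (hp : 0 ≤ p) (hψ₀ : ∀ t, 0 < t → 0 ≤ ψ t)
    (hW : ∀ n, IsGreenSolution p ψ (A n) (B n) (W n)) (hA₀ : ∀ n, 0 ≤ A n) (hB₀ : ∀ n, 0 ≤ B n)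
    (hA : Tendsto A atTop (nhds a)) (hB : Tendsto B atTop (nhds b))
    (hanti : ∀ s, 0 < s → Antitone fun n ↦ W n s) (hw : ∀ s, 0 < s → 0 < w s)
    (hlim : ∀ s, 0 < s → Tendsto (fun n ↦ W n s) atTop (nhds (w s))) :
    IsGreenSolution p ψ a b w := by
  have hdensity : ∀ t, 0 < t →
      Tendsto (fun n ↦ ψ t * W n t ^ (-p)) atTop (nhds (ψ t * w t ^ (-p))) := fun t ht ↦
    ((hlim t ht).rpow_const (Or.inl (hw t ht).ne')).const_mul _
  have hmono : ∀ t, 0 < t → Monotone fun n ↦ ψ t * W n t ^ (-p) := fun t ht m n hmn ↦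
    density_mono hp hψ₀ ht ((hW n).pos t ht) (hanti t ht hmn)
  have hint : GreenIntegrable fun t ↦ ψ t * w t ^ (-p) := by
    refine .of_tendsto (fun n ↦ (hW n).greenIntegrable) (fun n t ht ↦ mul_nonneg (hψ₀ t ht)
      (Real.rpow_nonneg ((hW n).pos t ht).le _)) hdensity (C := W 0 1) fun n ↦ ?_
    refine (le_add_of_nonneg_left ?_).trans (((hW n).eq_add 1 one_pos).symm.trans_le
      (hanti 1 one_pos n.zero_le))
    exact add_nonneg (hB₀ n) (mul_nonneg (hA₀ n) zero_le_one)
  refine ⟨hint, hw, fun s hs ↦ tendsto_nhds_unique (hlim s hs) ?_⟩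
  refine ((hB.add (hA.mul_const s)).add (tendsto_greenPotential_of_monotone
    (fun n ↦ (hW n).greenIntegrable) hint hmono hdensity hs.le)).congr fun n ↦ ?_
  exact ((hW n).eq_add s hs).symm

end MonotoneLimit

theorem exists_isGreenSolution (hp : 0 ≤ p) (hψ₀ : ∀ t, 0 < t → 0 < ψ t)
    (hψ : GreenIntegrable fun t ↦ ψ t * max 1 t ^ (-p)) (ha : 0 ≤ a) (hb : 0 ≤ b) :
    ∃ w, IsGreenSolution p ψ a b w := by
  set ε : ℕ → ℝ := fun n ↦ 1 / ((n : ℝ) + 1)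
  have hε : ∀ n, 0 < ε n := fun n ↦ Nat.one_div_pos_of_nat
  have hεanti : Antitone ε := fun m n hmn ↦ Nat.one_div_le_one_div hmn
  have hεlim : Tendsto ε atTop (nhds 0) := tendsto_one_div_add_atTop_nhds_zero_nat
  have hlim : ∀ c : ℝ, Tendsto (fun n ↦ c + ε n) atTop (nhds c) := fun c ↦ by
    simpa only [add_zero] using hεlim.const_add c
  have hψ₀' : ∀ t, 0 < t → 0 ≤ ψ t := fun t ht ↦ (hψ₀ t ht).le
  choose W hW using fun n ↦ exists_isGreenSolution_of_pos (a := a + ε n) (b := b + ε n) hp hψ₀' hψ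
    (add_pos_of_nonneg_of_pos ha (hε n)) (add_pos_of_nonneg_of_pos hb (hε n))
  have hanti : ∀ s, 0 < s → Antitone fun n ↦ W n s := fun s hs m n hmn ↦
    (hW n).le_of_le hp hψ₀' (hW m) (add_le_add_right (hεanti hmn) a)
      (add_le_add_right (hεanti hmn) b) hs
  have ha' : ∀ n, 0 ≤ a + ε n := fun n ↦ add_nonneg ha (hε n).le
  have hb' : ∀ n, 0 ≤ b + ε n := fun n ↦ add_nonneg hb (hε n).le
  obtain ⟨w, hw⟩ := exists_pos_tendsto_of_antitone_isGreenSolution hp hψ₀ hW ha' hb' hanti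
  exact ⟨w, .of_antitone_tendsto hp hψ₀' hW ha' hb' (hlim a) (hlim b) hanti
    (fun s hs ↦ (hw s hs).1) fun s hs ↦ (hw s hs).2⟩

namespace IsGreenSolution

lemma hasDerivAt (hw : IsGreenSolution p ψ a b w) (hs : 0 < s) :
    HasDerivAt w (a + ∫ t in Ioi s, ψ t * w t ^ (-p)) s := by
  refine (((hasDerivAt_const_mul a).const_add b).add
    (hasDerivAt_greenPotential hw.greenIntegrable hs)).congr_of_eventuallyEq ?_
  filter_upwards [Ioi_mem_nhds hs] with x hx using hw.eq_add x hx

lemma continuousOn (hw : IsGreenSolution p ψ a b w) : ContinuousOn w (Ioi 0) :=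
  fun _ hs ↦ (hw.hasDerivAt hs).continuousAt.continuousWithinAt

lemma continuousOn_density (hw : IsGreenSolution p ψ a b w) (hψ : ContinuousOn ψ (Ioi 0)) :
    ContinuousOn (fun t ↦ ψ t * w t ^ (-p)) (Ioi 0) :=
  hψ.mul (hw.continuousOn.rpow_const fun s hs ↦ Or.inl (hw.pos s hs).ne')

lemma hasDerivAt_deriv (hw : IsGreenSolution p ψ a b w) (hψ : ContinuousOn ψ (Ioi 0))
    (hs : 0 < s) :
    HasDerivAt (fun s ↦ a + ∫ t in Ioi s, ψ t * w t ^ (-p)) (-(ψ s * w s ^ (-p))) s :=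
  (hasDerivAt_integral_Ioi hw.greenIntegrable (hw.continuousOn_density hψ) hs).const_add a

lemma tendsto_nhdsGT_zero (hw : IsGreenSolution p ψ a b w) :
    Tendsto w (nhdsWithin 0 (Ioi 0)) (nhds b) := by
  have hG := ((continuousOn_greenPotential hw.greenIntegrable).continuousWithinAt
    self_mem_Ici).mono Ioi_subset_Ici_self
  have haffine : ContinuousWithinAt (fun s ↦ b + a * s) (Ioi 0) 0 := by fun_prop
  have hlim := haffine.tendsto.add hG.tendsto
  rw [greenPotential_zero, mul_zero, add_zero, add_zero] at hlim
  refine hlim.congr' ?_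
  filter_upwards [self_mem_nhdsWithin] with s hs using (hw.eq_add s hs).symm

lemma tendsto_div_atTop (hw : IsGreenSolution p ψ a b w) :
    Tendsto (fun s ↦ w s / s) atTop (nhds a) := by
  have hlim := ((tendsto_const_nhds (x := b)).div_atTop tendsto_id).add_const a |>.add
    (tendsto_greenPotential_div_atTop hw.greenIntegrable)
  rw [zero_add, add_zero] at hlim
  refine hlim.congr' ?_
  filter_upwards [eventually_gt_atTop 0] with s hs
  rw [hw.eq_add s hs, add_div, add_div, mul_div_cancel_right₀ a hs.ne', id_def]

end IsGreenSolution

end SingularEquation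

section Radial

lemma contDiffOn_two_of_hasDerivAt {w w' w'' : ℝ → ℝ} {s : Set ℝ} (hs : IsOpen s)
    (hw : ∀ t ∈ s, HasDerivAt w (w' t) t) (hw' : ∀ t ∈ s, HasDerivAt w' (w'' t) t)
    (hw'' : ContinuousOn w'' s) : ContDiffOn ℝ 2 w s := by
  have hfirst : ContDiffOn ℝ 1 w' s := by
    rw [← zero_add 1, contDiffOn_succ_iff_deriv_of_isOpen hs, contDiffOn_zero]
    exact ⟨fun t ht ↦ (hw' t ht).differentiableAt.differentiableWithinAt,
      fun h ↦ absurd h WithTop.zero_ne_top, hw''.congr fun t ht ↦ (hw' t ht).deriv⟩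
  rw [← one_add_one_eq_two, contDiffOn_succ_iff_deriv_of_isOpen hs]
  exact ⟨fun t ht ↦ (hw t ht).differentiableAt.differentiableWithinAt,
    fun h ↦ absurd h WithTop.one_ne_top,
    hfirst.congr fun t ht ↦ (hw t ht).deriv⟩

section InnerProductSpace

variable {E : Type*} [NormedAddCommGroup E] [InnerProductSpace ℝ E] {x : E} {v v' : ℝ → ℝ}

lemma hasFDerivAt_norm (hx : x ≠ 0) :
    HasFDerivAt (fun y : E ↦ ‖y‖) (‖x‖⁻¹ • innerSL ℝ x) x := by
  have hsqrt := (hasStrictFDerivAt_norm_sq x).hasFDerivAt.sqrt (pow_pos (norm_pos_iff.2 hx) 2).ne'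
  simp only [Real.sqrt_sq (norm_nonneg _)] at hsqrt
  refine hsqrt.congr_fderiv (ContinuousLinearMap.ext fun e ↦ ?_)
  simp only [smul_apply, smul_eq_mul, nsmul_eq_mul]
  field_simp
  norm_num

lemma hasFDerivAt_comp_norm {d : ℝ} (hx : x ≠ 0) (hv : HasDerivAt v d ‖x‖) :
    HasFDerivAt (fun y : E ↦ v ‖y‖) ((d / ‖x‖) • innerSL ℝ x) x := by
  have hcomp := hv.comp_hasFDerivAt x (hasFDerivAt_norm hx)
  rwa [smul_smul, ← div_eq_mul_inv] at hcomp

lemma iteratedFDeriv_two_comp_norm {d₂ : ℝ} (hx : x ≠ 0)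
    (hv : ∀ᶠ r in nhds ‖x‖, HasDerivAt v (v' r) r) (hv' : HasDerivAt v' d₂ ‖x‖) (e : E) :
    iteratedFDeriv ℝ 2 (fun y : E ↦ v ‖y‖) x ![e, e] =
      v' ‖x‖ / ‖x‖ * ‖e‖ ^ 2 + (d₂ - v' ‖x‖ / ‖x‖) / ‖x‖ ^ 2 * inner ℝ x e ^ 2 := by
  have hr : ‖x‖ ≠ 0 := norm_ne_zero_iff.2 hx
  have hfderiv : fderiv ℝ (fun y : E ↦ v ‖y‖) =ᶠ[nhds x]
      fun y ↦ (v' ‖y‖ / ‖y‖) • innerSL ℝ y := by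
    filter_upwards [continuous_norm.continuousAt.eventually hv, eventually_ne_nhds hx] with y hy hy₀
    exact (hasFDerivAt_comp_norm hy₀ hy).fderiv
  have hquot : HasFDerivAt (fun y : E ↦ v' ‖y‖ / ‖y‖)
      (((d₂ * ‖x‖ - v' ‖x‖) / ‖x‖ ^ 2 / ‖x‖) • innerSL ℝ x) x := by
    simpa only [mul_one] using
      hasFDerivAt_comp_norm (v := fun r ↦ v' r / r) hx (hv'.fun_div (hasDerivAt_id' ‖x‖) hr)
  have hsecond := hquot.fun_smul ((innerSL ℝ).hasFDerivAt (x := x))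
  rw [iteratedFDeriv_two_apply, hfderiv.fderiv_eq, hsecond.fderiv]
  change v' ‖x‖ / ‖x‖ * inner ℝ e e +
    (d₂ * ‖x‖ - v' ‖x‖) / ‖x‖ ^ 2 / ‖x‖ * inner ℝ x e * inner ℝ x e = _
  rw [real_inner_self_eq_norm_sq]
  field_simp

end InnerProductSpace

lemma laplacian_comp_norm {N : ℕ} {x : EuclideanSpace ℝ (Fin N)} {v v' : ℝ → ℝ} {d₂ : ℝ}
    (hx : x ≠ 0) (hv : ∀ᶠ r in nhds ‖x‖, HasDerivAt v (v' r) r) (hv' : HasDerivAt v' d₂ ‖x‖) :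
    laplacian (fun y : EuclideanSpace ℝ (Fin N) ↦ v ‖y‖) x =
      d₂ + (N - 1) / ‖x‖ * v' ‖x‖ := by
  have hr : ‖x‖ ≠ 0 := norm_ne_zero_iff.2 hx
  have hnorm : ∑ i, x i ^ 2 = ‖x‖ ^ 2 := (EuclideanSpace.real_norm_sq_eq x).symm
  simp only [laplacian, iteratedFDeriv_two_comp_norm hx hv hv', PiLp.norm_single,
    EuclideanSpace.inner_single_right, norm_one, one_pow, one_mul, mul_one,
    Finset.sum_add_distrib, ← Finset.mul_sum, Finset.sum_const, Finset.card_univ, Fintype.card_fin,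
    nsmul_eq_mul, conj_trivial, hnorm]
  field_simp
  ring

end Radial

section EmdenVariable

variable {N : ℕ} {k p a b r d d₂ : ℝ} {φ w w' : ℝ → ℝ}

lemma hasDerivAt_comp_rpow_const {q : ℝ} (hr : 0 < r) (hw : HasDerivAt w d (r ^ q)) :
    HasDerivAt (fun r ↦ w (r ^ q)) (d * (q * r ^ (q - 1))) r :=
  hw.comp r (Real.hasDerivAt_rpow_const (Or.inl hr.ne'))

lemma laplacian_comp_norm_rpow_neg (hN : (N : ℝ) = k + 2) {x : EuclideanSpace ℝ (Fin N)}
    (hx : x ≠ 0) (hw : ∀ s, 0 < s → HasDerivAt w (w' s) s)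
    (hw' : HasDerivAt w' d₂ (‖x‖ ^ (-k))) :
    laplacian (fun y : EuclideanSpace ℝ (Fin N) ↦ w (‖y‖ ^ (-k))) x =
      k ^ 2 / ‖x‖ ^ (2 * (k + 1)) * d₂ := by
  have hr : 0 < ‖x‖ := norm_pos_iff.2 hx
  have hfirst : ∀ᶠ r in nhds ‖x‖, HasDerivAt (fun r ↦ w (r ^ (-k)))
      (w' (r ^ (-k)) * (-k * r ^ (-k - 1))) r := by
    filter_upwards [Ioi_mem_nhds hr] with r hr
    exact hasDerivAt_comp_rpow_const hr (hw _ (Real.rpow_pos_of_pos hr _))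
  have hsecond := (hasDerivAt_comp_rpow_const hr hw').fun_mul
    ((Real.hasDerivAt_rpow_const (p := -k - 1) (Or.inl hr.ne')).const_mul (-k))
  rw [laplacian_comp_norm hx hfirst hsecond, hN, Real.rpow_sub_one hr.ne' (-k - 1),
    show -k - 1 = -(k + 1) by ring, Real.rpow_neg hr.le (k + 1), mul_comm 2 (k + 1),
    Real.rpow_mul hr.le, Real.rpow_two]
  field_simp
  ring

/-- The coefficient `ψ` of the equation `-w'' = ψ w ^ (-p)` into which `-Δu = φ(|x|) u ^ (-p)` is
turned by the Emden variable `s = |x| ^ (-k)`, where `k = N - 2`. -/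
noncomputable def emdenCoeff (k : ℝ) (φ : ℝ → ℝ) (s : ℝ) : ℝ :=
  φ (s ^ (-k⁻¹)) * (s ^ (-k⁻¹)) ^ (2 * (k + 1)) / k ^ 2

lemma emdenCoeff_rpow_neg (hk : k ≠ 0) (hr : 0 ≤ r) :
    emdenCoeff k φ (r ^ (-k)) = φ r * r ^ (2 * (k + 1)) / k ^ 2 := by
  rw [emdenCoeff, ← Real.rpow_mul hr, neg_mul_neg, mul_inv_cancel₀ hk, Real.rpow_one]

lemma emdenCoeff_pos (hk : k ≠ 0) (hφ : ∀ r, 0 < r → 0 < φ r) {s : ℝ} (hs : 0 < s) :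
    0 < emdenCoeff k φ s := by
  have hr : 0 < s ^ (-k⁻¹) := Real.rpow_pos_of_pos hs _
  exact div_pos (mul_pos (hφ _ hr) (Real.rpow_pos_of_pos hr _)) (by positivity)

lemma continuousOn_emdenCoeff (hφ : ContinuousOn φ (Ioi 0)) :
    ContinuousOn (emdenCoeff k φ) (Ioi 0) := by
  have hpow : ContinuousOn (fun s : ℝ ↦ s ^ (-k⁻¹)) (Ioi 0) :=
    continuousOn_id.rpow_const fun s hs ↦ Or.inl (ne_of_gt hs)
  have hpos : MapsTo (fun s : ℝ ↦ s ^ (-k⁻¹)) (Ioi 0) (Ioi 0) :=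
    fun s hs ↦ Real.rpow_pos_of_pos hs _
  exact ((hφ.comp hpow hpos).mul
    (hpow.rpow_const fun s hs ↦ Or.inl (ne_of_gt (hpos hs)))).div_const _

lemma greenIntegrable_emdenCoeff (hk : 0 < k)
    (hφ₀ : IntegrableOn (fun r ↦ r ^ (k + 1 + p * k) * φ r) (Ioo 0 1))
    (hφ₁ : IntegrableOn (fun r ↦ r * φ r) (Ioi 1)) :
    GreenIntegrable fun t ↦ emdenCoeff k φ t * max 1 t ^ (-p) := by
  rw [GreenIntegrable, ← integrableOn_Ioi_comp_rpow_iff' _ (neg_ne_zero.2 hk.ne'),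
    ← Ioo_union_Ici_eq_Ioi one_pos, integrableOn_union, integrableOn_Ici_iff_integrableOn_Ioi]
  constructor
  · refine IntegrableOn.congr_fun (hφ₀.div_const (k ^ 2)) (fun r hr ↦ ?_) measurableSet_Ioo
    have hr₀ : 0 < r := hr.1
    have hle : 1 ≤ r ^ (-k) :=
      Real.one_le_rpow_of_pos_of_le_one_of_nonpos hr₀ hr.2.le (neg_nonpos.2 hk.le)
    simp only [smul_eq_mul]
    rw [min_eq_left hle, max_eq_right hle, emdenCoeff_rpow_neg hk.ne' hr₀.le,
      ← Real.rpow_mul hr₀.le, show k + 1 + p * k = (-k - 1) + 2 * (k + 1) + -k * -p by ring,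
      Real.rpow_add hr₀, Real.rpow_add hr₀]
    ring
  · refine IntegrableOn.congr_fun (hφ₁.div_const (k ^ 2)) (fun r hr ↦ ?_) measurableSet_Ioi
    have hr₀ : 0 < r := one_pos.trans hr
    have hle : r ^ (-k) ≤ 1 :=
      Real.rpow_le_one_of_one_le_of_nonpos (le_of_lt hr) (neg_nonpos.2 hk.le)
    have hone : r = r ^ (-k - 1) * r ^ (-k) * r ^ (2 * (k + 1)) := by
      rw [← Real.rpow_add hr₀, ← Real.rpow_add hr₀,
        show -k - 1 + -k + 2 * (k + 1) = 1 by ring, Real.rpow_one]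
    simp only [smul_eq_mul]
    rw [min_eq_right hle, max_eq_left hle, Real.one_rpow, emdenCoeff_rpow_neg hk.ne' hr₀.le]
    nth_rw 1 [hone]
    ring

lemma tendsto_norm_rpow_neg_nhdsNE_zero {E : Type*} [NormedAddCommGroup E] (hk : 0 < k) :
    Tendsto (fun x : E ↦ ‖x‖ ^ (-k)) (nhdsWithin 0 {0}ᶜ) atTop :=
  (tendsto_rpow_neg_nhdsGT_zero (neg_lt_zero.2 hk)).comp tendsto_norm_nhdsNE_zero

lemma tendsto_norm_rpow_neg_cocompact {E : Type*} [NormedAddCommGroup E] [ProperSpace E]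
    (hk : 0 < k) :
    Tendsto (fun x : E ↦ ‖x‖ ^ (-k)) (cocompact E) (nhdsWithin 0 (Ioi 0)) := by
  refine tendsto_nhdsWithin_iff.2
    ⟨(tendsto_rpow_neg_atTop hk).comp (tendsto_norm_cocompact_atTop), ?_⟩
  filter_upwards [(isCompact_singleton (x := (0 : E))).compl_mem_cocompact] with x hx
  exact Real.rpow_pos_of_pos (norm_pos_iff.2 hx) _

namespace IsGreenSolution

lemma isSol (hN : (N : ℝ) = k + 2) (hk : k ≠ 0) (hφ : ContinuousOn φ (Ioi 0))
    (hw : IsGreenSolution p (emdenCoeff k φ) a b w) :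
    IsSol φ p fun x : EuclideanSpace ℝ (Fin N) ↦ w (‖x‖ ^ (-k)) := by
  have hψ := continuousOn_emdenCoeff (k := k) hφ
  have hnorm : ∀ x : EuclideanSpace ℝ (Fin N), x ≠ 0 → 0 < ‖x‖ ^ (-k) := fun x hx ↦
    Real.rpow_pos_of_pos (norm_pos_iff.2 hx) _
  have hw₂ : ContDiffOn ℝ 2 w (Ioi 0) := contDiffOn_two_of_hasDerivAt isOpen_Ioi
    (fun s hs ↦ hw.hasDerivAt hs) (fun s hs ↦ hw.hasDerivAt_deriv hψ hs)
    (hw.continuousOn_density hψ).neg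
  refine ⟨hw₂.comp ((contDiffOn_id.norm ℝ fun x hx ↦ hx).rpow_const_of_ne
    fun x hx ↦ norm_ne_zero_iff.2 hx) hnorm, fun x hx ↦ ⟨hw.pos _ (hnorm x hx), ?_⟩⟩
  have hr : 0 < ‖x‖ := norm_pos_iff.2 hx
  rw [laplacian_comp_norm_rpow_neg hN hx (fun s hs ↦ hw.hasDerivAt hs)
    (hw.hasDerivAt_deriv hψ (hnorm x hx)), emdenCoeff_rpow_neg hk hr.le]
  have hpow : ‖x‖ ^ (2 * (k + 1)) ≠ 0 := (Real.rpow_pos_of_pos hr _).ne'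
  field_simp

lemma tendsto_norm_rpow_mul {E : Type*} [NormedAddCommGroup E] {ψ : ℝ → ℝ} (hk : 0 < k)
    (hw : IsGreenSolution p ψ a b w) :
    Tendsto (fun x : E ↦ ‖x‖ ^ k * w (‖x‖ ^ (-k))) (nhdsWithin 0 {0}ᶜ) (nhds a) := by
  refine (hw.tendsto_div_atTop.comp (tendsto_norm_rpow_neg_nhdsNE_zero hk)).congr fun x ↦ ?_
  rw [Function.comp_apply, Real.rpow_neg (norm_nonneg x), div_inv_eq_mul, mul_comm]

lemma tendsto_cocompact {E : Type*} [NormedAddCommGroup E] [ProperSpace E] {ψ : ℝ → ℝ}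
    (hk : 0 < k) (hw : IsGreenSolution p ψ a b w) :
    Tendsto (fun x : E ↦ w (‖x‖ ^ (-k))) (cocompact E) (nhds b) :=
  hw.tendsto_nhdsGT_zero.comp (tendsto_norm_rpow_neg_cocompact hk)

end IsGreenSolution

end EmdenVariable

section PowerBounds

variable {φ : ℝ → ℝ} {c e q : ℝ}

lemma continuousOn_of_holderOnWith_compacts {s : Set ℝ} (hs : IsOpen s) {γ : ℝ≥0} (hγ : 0 < γ)
    (hφ : ∀ t : Set ℝ, IsCompact t → t ⊆ s → ∃ C : ℝ≥0, HolderOnWith C γ φ t) :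
    ContinuousOn φ s := by
  intro x hx
  obtain ⟨t, ht, hxt, hts⟩ := exists_compact_subset hs hx
  obtain ⟨C, hC⟩ := hφ t ht hts
  exact ((hC.continuousOn hγ).continuousAt (mem_interior_iff_mem_nhds.1 hxt)).continuousWithinAt

lemma integrableOn_rpow_mul_of_le {s : Set ℝ} (hs : MeasurableSet s) (hs₀ : s ⊆ Ioi 0)
    (hφ : ContinuousOn φ s) (hφ₀ : ∀ r ∈ s, 0 ≤ φ r) (hle : ∀ r ∈ s, φ r ≤ c * r ^ e)
    (hint : IntegrableOn (fun r : ℝ ↦ r ^ (q + e)) s) :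
    IntegrableOn (fun r ↦ r ^ q * φ r) s := by
  have hcont : ContinuousOn (fun r ↦ r ^ q * φ r) s :=
    (continuousOn_id.rpow_const fun r hr ↦ Or.inl (ne_of_gt (hs₀ hr))).mul hφ
  refine (hint.const_mul c).mono' (hcont.aestronglyMeasurable hs) ?_
  filter_upwards [ae_restrict_mem hs] with r hr
  have hr₀ : 0 < r := hs₀ hr
  rw [Real.norm_of_nonneg (mul_nonneg (Real.rpow_nonneg hr₀.le q) (hφ₀ r hr)), Real.rpow_add hr₀,
    mul_left_comm]
  exact mul_le_mul_of_nonneg_left (hle r hr) (Real.rpow_nonneg hr₀.le q)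

lemma integrableOn_Ioo_rpow_mul_of_le_rpow (hφ : ContinuousOn φ (Ioi 0))
    (hφ₀ : ∀ r, 0 < r → 0 ≤ φ r) (hle : ∀ r, 0 < r → r < 1 → φ r ≤ c * r ^ e) (hq : -1 < q + e) :
    IntegrableOn (fun r ↦ r ^ q * φ r) (Ioo 0 1) :=
  integrableOn_rpow_mul_of_le measurableSet_Ioo Ioo_subset_Ioi_self
    (hφ.mono Ioo_subset_Ioi_self) (fun r hr ↦ hφ₀ r hr.1) (fun r hr ↦ hle r hr.1 hr.2)
    ((intervalIntegral.integrableOn_Ioo_rpow_iff one_pos).2 hq)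

lemma integrableOn_Ioi_rpow_mul_of_le_rpow (hφ : ContinuousOn φ (Ioi 0))
    (hφ₀ : ∀ r, 0 < r → 0 ≤ φ r) (hle : ∀ r, 1 < r → φ r ≤ c * r ^ e) (hq : q + e < -1) :
    IntegrableOn (fun r ↦ r ^ q * φ r) (Ioi 1) :=
  integrableOn_rpow_mul_of_le measurableSet_Ioi (Ioi_subset_Ioi zero_le_one)
    (hφ.mono (Ioi_subset_Ioi zero_le_one)) (fun r hr ↦ hφ₀ r (one_pos.trans hr)) hle
    (integrableOn_Ioi_rpow_of_lt hq one_pos)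

end PowerBounds

theorem statement_14_general {N : ℕ} (hN : 3 ≤ N) {p : ℝ} (hp : 0 ≤ p) {φ : ℝ → ℝ}
    (hφpos : ∀ r, 0 < r → 0 < φ r) (hφ : ContinuousOn φ (Ioi 0))
    (hφ₀ : IntegrableOn (fun r ↦ r ^ ((N : ℝ) - 1 + p * (N - 2)) * φ r) (Ioo 0 1))
    (hφ₁ : IntegrableOn (fun r ↦ r * φ r) (Ioi 1)) {a b : ℝ} (ha : 0 ≤ a) (hb : 0 ≤ b) :
    ∃ u : EuclideanSpace ℝ (Fin N) → ℝ, IsSol φ p u ∧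
      (∀ x y : EuclideanSpace ℝ (Fin N), x ≠ 0 → y ≠ 0 → ‖x‖ = ‖y‖ → u x = u y) ∧
      Tendsto (fun x : EuclideanSpace ℝ (Fin N) ↦ ‖x‖ ^ ((N : ℝ) - 2) * u x)
        (nhdsWithin (0 : EuclideanSpace ℝ (Fin N)) {0}ᶜ) (nhds a) ∧
      Tendsto u (cocompact (EuclideanSpace ℝ (Fin N))) (nhds b) := by
  have hk : 0 < (N : ℝ) - 2 := by
    have : (3 : ℝ) ≤ N := by exact_mod_cast hN
    linarith
  have hψ : GreenIntegrable fun t ↦ emdenCoeff (N - 2) φ t * max 1 t ^ (-p) :=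
    greenIntegrable_emdenCoeff hk (by convert hφ₀ using 4; ring) hφ₁
  obtain ⟨w, hw⟩ :=
    exists_isGreenSolution hp (fun t ht ↦ emdenCoeff_pos hk.ne' hφpos ht) hψ ha hb
  exact ⟨fun x ↦ w (‖x‖ ^ (-((N : ℝ) - 2))), hw.isSol (by ring) hk.ne' hφ,
    fun x y _ _ hxy ↦ by simp only [hxy], hw.tendsto_norm_rpow_mul hk, hw.tendsto_cocompact hk⟩

/-- Theorem 4.2 (i): for any `a, b ≥ 0` there is a radially symmetric solution `u_{a,b}`
with `|x|^{N-2} u(x) → a` as `|x| → 0` and `u(x) → b` as `|x| → ∞`. -/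
theorem statement_14 {N : ℕ} (hN : 3 ≤ N) (p : ℝ) (hp : 0 < p) (α β : ℝ)
    (haabb : 0 < (N:ℝ) + α + p * ((N:ℝ) - 2)) (hβ2 : β < -2)
    (γ : NNReal) (hγ0 : 0 < γ) (hγ1 : γ < 1) (φ : ℝ → ℝ)
    (hφpos : ∀ r : ℝ, 0 < r → 0 < φ r)
    (hφhold : ∀ s : Set ℝ, IsCompact s → s ⊆ Ioi (0:ℝ) → ∃ C : NNReal, HolderOnWith C γ φ s)
    (c₁ c₂ : ℝ) (hc₁ : 0 < c₁) (hc₂ : 0 < c₂)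
    (hα : ∀ r : ℝ, 0 < r → r < 1 → c₁ * r ^ α ≤ φ r ∧ φ r ≤ c₂ * r ^ α)
    (hβ : ∀ r : ℝ, 1 < r → c₁ * r ^ β ≤ φ r ∧ φ r ≤ c₂ * r ^ β) :
    ∀ a b : ℝ, 0 ≤ a → 0 ≤ b →
      ∃ u : EuclideanSpace ℝ (Fin N) → ℝ, IsSol φ p u ∧
        (∀ x y : EuclideanSpace ℝ (Fin N), x ≠ 0 → y ≠ 0 → ‖x‖ = ‖y‖ → u x = u y) ∧
        Tendsto (fun x : EuclideanSpace ℝ (Fin N) => ‖x‖ ^ ((N:ℝ) - 2) * u x)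
          (nhdsWithin (0 : EuclideanSpace ℝ (Fin N)) {0}ᶜ) (nhds a) ∧
        Tendsto u (Filter.cocompact (EuclideanSpace ℝ (Fin N))) (nhds b) := by
  have hφ := continuousOn_of_holderOnWith_compacts isOpen_Ioi hγ0 hφhold
  have hφ₀ : ∀ r, 0 < r → 0 ≤ φ r := fun r hr ↦ (hφpos r hr).le
  have hzero : IntegrableOn (fun r ↦ r ^ ((N : ℝ) - 1 + p * (N - 2)) * φ r) (Ioo 0 1) :=
    integrableOn_Ioo_rpow_mul_of_le_rpow hφ hφ₀ (fun r h₀ h₁ ↦ (hα r h₀ h₁).2) (by linarith)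
  have hinfty : IntegrableOn (fun r ↦ r ^ (1 : ℝ) * φ r) (Ioi 1) :=
    integrableOn_Ioi_rpow_mul_of_le_rpow hφ hφ₀ (fun r hr ↦ (hβ r hr).2) (by linarith)
  simp only [Real.rpow_one] at hinfty
  exact fun a b ha hb ↦ statement_14_general hN hp.le hφpos hφ hzero hinfty ha hb
end

section
/- Let N ≥ 3, p > 0, α, β ∈ ℝ with N + α + p(N−2) > 0 and β < −2, γ ∈ (0,1), and let φ : (0,∞) → (0,∞) be locally γ-Hölder continuous and satisfy, for some constants c₁, c₂ > 0: c₁ r^α ≤ φ(r) ≤ c₂ r^α for all 0 < r < 1, and c₁ r^β ≤ φ(r) ≤ c₂ r^β for all r > 1. Then every C² positive solution u of −Δu = φ(|x|) u^{−p} on ℝ^N \ {0} is radially symmetric, the limits a := lim_{|x|→0} |x|^{N−2} u(x) and b := lim_{|x|→∞} u(x) exist and are finite nonnegative real numbers, and any two C² positive solutions having the same pair of limits (a,b) are identical. -/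
open Metric Set MeasureTheory Filter

/-!
Let `n` be the dimension. Since `-Δu > 0`, comparison with the radial harmonic functions
`A |x|^{2-n} + B` on annuli shows that the minimum of `u` over the sphere of radius `r` is a
positive concave function of `s = r^{2-n}`. Such a function has a finite slope `a ≥ 0` as `s → ∞`
and a finite value `b ≥ 0` as `s → 0`, and `v = u - a |x|^{2-n} - b` is positive. As
`0 ≤ -Δv ≤ φ(|x|) v^{-p}`, a Harnack inequality bounds the maximum of `v` on a sphere by a multiple
of its minimum plus an error of order `r^{(2+e)/(1+p)}` when `φ(r) = O(r^e)`. The conditions on `α`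
and `β` make this error negligible at `0` and at `∞`, so `a` and `b` are limits of `u` itself.

Since `t ↦ t^{-p}` is decreasing, the maximum principle orders two solutions with the same limits
both ways. A reflection preserves the equation and the limits, hence it preserves `u`.
-/

open Asymptotics
open Bornology (cobounded)
open Module (finrank)
open scoped Laplacian InnerProductSpace Topology

section Laplacian

variable {E : Type*} [NormedAddCommGroup E] [InnerProductSpace ℝ E]

lemma iteratedFDeriv_two_eq_fderiv_fderiv_apply {u : E → ℝ} {x : E} (hu : ContDiffAt ℝ 2 u x)
    (e : E) :
    iteratedFDeriv ℝ 2 u x ![e, e] = fderiv ℝ (fun y => fderiv ℝ u y e) x e := by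
  have hd : DifferentiableAt ℝ (fderiv ℝ u) x :=
    (hu.fderiv_right (m := 1) (by norm_num)).differentiableAt (by simp)
  rw [iteratedFDeriv_two_apply, fderiv_clm_apply hd (differentiableAt_const e)]
  simp

lemma laplacian_eq_sum_fderiv_fderiv [FiniteDimensional ℝ E] {ι : Type*} [Fintype ι]
    (b : OrthonormalBasis ι ℝ E) {u : E → ℝ} {x : E} (hu : ContDiffAt ℝ 2 u x) :
    Δ u x = ∑ i, fderiv ℝ (fun y => fderiv ℝ u y (b i)) x (b i) := by
  rw [InnerProductSpace.laplacian_eq_iteratedFDeriv_orthonormalBasis u b]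
  exact Finset.sum_congr rfl fun i _ => iteratedFDeriv_two_eq_fderiv_fderiv_apply hu (b i)

variable [FiniteDimensional ℝ E]

lemma continuous_laplacian {u : E → ℝ} (hu : ContDiff ℝ 2 u) : Continuous (Δ u) := by
  rw [InnerProductSpace.laplacian_eq_iteratedFDeriv_stdOrthonormalBasis]
  exact continuous_finsetSum _ fun i _ =>
    (ContinuousMultilinearMap.apply ℝ (fun _ : Fin 2 => E) ℝ
      ![stdOrthonormalBasis ℝ E i, stdOrthonormalBasis ℝ E i]).continuous.comp
      (hu.continuous_iteratedFDeriv le_rfl)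

lemma laplacian_comp_linearIsometryEquiv (R : E ≃ₗᵢ[ℝ] E) (u : E → ℝ) (x : E) :
    Δ (u ∘ R) x = Δ u (R x) := by
  rw [InnerProductSpace.laplacian_eq_iteratedFDeriv_orthonormalBasis u
      ((stdOrthonormalBasis ℝ E).map R),
    InnerProductSpace.laplacian_eq_iteratedFDeriv_stdOrthonormalBasis]
  refine Finset.sum_congr rfl fun i _ => ?_
  have h := ContinuousLinearEquiv.iteratedFDerivWithin_comp_right (𝕜 := ℝ)
    R.toContinuousLinearEquiv u uniqueDiffOn_univ (x := x) (mem_univ _) 2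
  simp only [preimage_univ, iteratedFDerivWithin_univ] at h
  change iteratedFDeriv ℝ 2 (u ∘ R.toContinuousLinearEquiv) x _ = _
  rw [h, ContinuousMultilinearMap.compContinuousLinearMap_apply]
  congr 1
  ext j
  fin_cases j <;> simp

lemma deriv_deriv_nonneg_of_isLocalMin {f : ℝ → ℝ} {a : ℝ} (hmin : IsLocalMin f a)
    (hf : ContinuousAt f a) : 0 ≤ deriv (deriv f) a := by
  by_contra! hneg
  have hmax : IsLocalMax f a := isLocalMax_of_deriv_deriv_neg hneg hmin.deriv_eq_zero hf
  have hconst : f =ᶠ[𝓝 a] fun _ => f a := by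
    filter_upwards [hmin, hmax] with t h1 h2 using le_antisymm h2 h1
  have h0 : deriv (deriv f) a = 0 := by simp [hconst.deriv.deriv_eq]
  exact hneg.ne h0

lemma laplacian_nonneg_of_isLocalMin {u : E → ℝ} {x : E} (hu : ContDiffAt ℝ 2 u x)
    (hmin : IsLocalMin u x) : 0 ≤ Δ u x := by
  rw [laplacian_eq_sum_fderiv_fderiv (stdOrthonormalBasis ℝ E) hu]
  refine Finset.sum_nonneg fun i _ => ?_
  set e := stdOrthonormalBasis ℝ E i
  have hline : ∀ t : ℝ, HasDerivAt (fun t : ℝ => x + t • e) e t := fun t => by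
    simpa using ((hasDerivAt_id t).smul_const e).const_add x
  have htend : Tendsto (fun t : ℝ => x + t • e) (𝓝 0) (𝓝 x) := by
    simpa using (hline 0).continuousAt.tendsto
  have hderiv : deriv (fun t : ℝ => u (x + t • e)) =ᶠ[𝓝 0]
      fun t => fderiv ℝ u (x + t • e) e := by
    filter_upwards [htend.eventually (hu.eventually (by simp))] with t ht
    exact ((ht.differentiableAt (by simp)).hasFDerivAt.comp_hasDerivAt t (hline t)).deriv
  have hdiff : DifferentiableAt ℝ (fun y => fderiv ℝ u y e) (x + (0 : ℝ) • e) := by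
    have : DifferentiableAt ℝ (fderiv ℝ u) x :=
      (hu.fderiv_right (m := 1) (by norm_num)).differentiableAt (by simp)
    simpa using this.clm_apply (differentiableAt_const e)
  have hsecond : deriv (deriv fun t : ℝ => u (x + t • e)) 0 =
      fderiv ℝ (fun y => fderiv ℝ u y e) x e := by
    rw [hderiv.deriv_eq]
    simpa [Function.comp_def] using (hdiff.hasFDerivAt.comp_hasDerivAt (0 : ℝ) (hline 0)).deriv
  rw [← hsecond]
  refine deriv_deriv_nonneg_of_isLocalMin ?_ ?_
  · filter_upwards [htend.eventually hmin] with t ht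
    simpa using ht
  · exact ContinuousAt.comp (by simpa using hu.continuousAt) (hline 0).continuousAt

end Laplacian

section RadialPower

variable {E : Type*} [NormedAddCommGroup E] [InnerProductSpace ℝ E]

lemma contDiffAt_norm_rpow {x : E} (hx : x ≠ 0) (s : ℝ) :
    ContDiffAt ℝ 2 (fun y : E => ‖y‖ ^ s) x :=
  (contDiffAt_norm ℝ hx).rpow_const_of_ne (norm_ne_zero_iff.2 hx)

lemma hasFDerivAt_norm_rpow_of_ne_zero {x : E} (hx : x ≠ 0) (s : ℝ) :
    HasFDerivAt (fun y : E => ‖y‖ ^ s) ((s * ‖x‖ ^ (s - 2)) • innerSL ℝ x) x := by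
  have hpow : ∀ (y : E) (t : ℝ), (‖y‖ ^ 2) ^ t = ‖y‖ ^ (2 * t) := fun y t => by
    rw [← Real.rpow_natCast_mul (norm_nonneg y)]; norm_num
  have h := (hasStrictFDerivAt_norm_sq x).hasFDerivAt.rpow_const (p := s / 2)
    (Or.inl (pow_ne_zero 2 (norm_ne_zero_iff.2 hx)))
  simp only [hpow] at h
  convert h using 1
  · simp only [mul_div_cancel₀ s (two_ne_zero' ℝ)]
  · rw [← Nat.cast_smul_eq_nsmul ℝ, smul_smul]
    congr 1
    push_cast
    ring_nf

variable [FiniteDimensional ℝ E]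

theorem laplacian_norm_rpow {x : E} (hx : x ≠ 0) (s : ℝ) :
    Δ (fun y : E => ‖y‖ ^ s) x = s * (s + finrank ℝ E - 2) * ‖x‖ ^ (s - 2) := by
  set b := stdOrthonormalBasis ℝ E
  have hsecond : ∀ i, fderiv ℝ (fun y => fderiv ℝ (fun y : E => ‖y‖ ^ s) y (b i)) x (b i) =
      s * ‖x‖ ^ (s - 2) + s * (s - 2) * ‖x‖ ^ (s - 4) * ⟪x, b i⟫_ℝ ^ 2 := fun i => by
    have hfirst : (fun y => fderiv ℝ (fun y : E => ‖y‖ ^ s) y (b i)) =ᶠ[𝓝 x]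
        fun y => s * ‖y‖ ^ (s - 2) * ⟪y, b i⟫_ℝ := by
      filter_upwards [eventually_ne_nhds hx] with y hy
      simp [(hasFDerivAt_norm_rpow_of_ne_zero hy s).fderiv]
    have h := ((hasFDerivAt_norm_rpow_of_ne_zero hx (s - 2)).const_mul s).mul
      ((hasFDerivAt_id x).inner ℝ (hasFDerivAt_const (b i) x))
    rw [hfirst.fderiv_eq]
    refine (congrArg (· (b i)) h.fderiv).trans ?_
    simp
    ring_nf
  have hsum : ∑ i, ⟪x, b i⟫_ℝ ^ 2 = ‖x‖ ^ 2 := b.sum_sq_inner_left x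
  have hnorm : ‖x‖ ^ (s - 4) * ‖x‖ ^ 2 = ‖x‖ ^ (s - 2) := by
    rw [← Real.rpow_natCast, ← Real.rpow_add (norm_pos_iff.2 hx)]; ring_nf
  rw [laplacian_eq_sum_fderiv_fderiv b (contDiffAt_norm_rpow hx s),
    Finset.sum_congr rfl fun i _ => hsecond i, Finset.sum_add_distrib,
    ← Finset.mul_sum _ _ (_ * _), hsum, Finset.sum_const, Finset.card_univ, Fintype.card_fin,
    nsmul_eq_mul]
  linear_combination s * (s - 2) * hnorm

/-- The radial harmonic functions `a |x|^{2-n} + b` on `E \ {0}`, where `n = dim E ≠ 2`. -/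
noncomputable def radialHarmonic (a b : ℝ) (x : E) : ℝ :=
  a * ‖x‖ ^ (2 - finrank ℝ E : ℝ) + b

omit [FiniteDimensional ℝ E] in
lemma contDiffAt_radialHarmonic (a b : ℝ) {x : E} (hx : x ≠ 0) :
    ContDiffAt ℝ 2 (radialHarmonic a b) x :=
  (contDiffAt_const.mul (contDiffAt_norm_rpow hx _)).add contDiffAt_const

lemma laplacian_radialHarmonic (a b : ℝ) {x : E} (hx : x ≠ 0) :
    Δ (radialHarmonic a b : E → ℝ) x = 0 := by
  have h := contDiffAt_norm_rpow hx (2 - finrank ℝ E : ℝ)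
  have hsmul : ContDiffAt ℝ 2 (a • fun y : E => ‖y‖ ^ (2 - finrank ℝ E : ℝ)) x := h.const_smul a
  have hsplit : (radialHarmonic a b : E → ℝ) =
      a • (fun y : E => ‖y‖ ^ (2 - finrank ℝ E : ℝ)) + fun _ => b := rfl
  rw [hsplit, hsmul.laplacian_add contDiffAt_const,
    InnerProductSpace.laplacian_smul a h, laplacian_norm_rpow hx]
  simp

end RadialPower

section BallAverage

variable {E : Type*} [NormedAddCommGroup E]

/-- The weight `(1 - |y|²)₊` on the unit ball. Its square is `C¹` with gradient a multiple of
`(1 - |y|²)₊ y`, which makes averages against it differentiable in the radius. -/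
noncomputable def ballWeight (y : E) : ℝ :=
  max (1 - ‖y‖ ^ 2) 0

lemma continuous_ballWeight : Continuous (ballWeight : E → ℝ) := by
  unfold ballWeight; fun_prop

lemma ballWeight_nonneg (y : E) : 0 ≤ ballWeight y :=
  le_max_right _ _

lemma ballWeight_le_one (y : E) : ballWeight y ≤ 1 :=
  max_le (by linarith [sq_nonneg ‖y‖]) zero_le_one

lemma ballWeight_eq_zero {y : E} (hy : 1 ≤ ‖y‖) : ballWeight y = 0 :=
  max_eq_right (by nlinarith)

lemma hasCompactSupport_ballWeight [ProperSpace E] : HasCompactSupport (ballWeight : E → ℝ) :=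
  HasCompactSupport.intro (isCompact_closedBall 0 1) fun _ hy =>
    ballWeight_eq_zero (by simpa using (not_le.1 (by simpa using hy)).le)

variable [InnerProductSpace ℝ E]

lemma ballWeight_mul_comp_le_ballWeight_mul_comp {w v : E → ℝ} {x : E} {r : ℝ} (hr : 0 ≤ r)
    (h : ∀ z ∈ closedBall x r, w z ≤ v z) (y : E) :
    ballWeight y * w (x + r • y) ≤ ballWeight y * v (x + r • y) := by
  rcases le_total 1 ‖y‖ with hy | hy
  · simp [ballWeight_eq_zero hy]
  · refine mul_le_mul_of_nonneg_left (h _ ?_) (ballWeight_nonneg y)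
    simpa [norm_smul, abs_of_nonneg hr] using mul_le_of_le_one_right hr hy

lemma ballWeight_four_smul_sub_le {c : E} (hc : ‖c‖ ≤ 1 / 4) (y : E) :
    ballWeight ((4 : ℝ) • (y - c)) ≤ 2 * ballWeight y := by
  rcases le_total 1 ‖(4 : ℝ) • (y - c)‖ with h | h
  · rw [ballWeight_eq_zero h]
    exact mul_nonneg zero_le_two (ballWeight_nonneg y)
  · have hsub : ‖y - c‖ ≤ 1 / 4 := by
      rw [norm_smul, Real.norm_ofNat] at h; linarith
    have hy : ‖y‖ ≤ 1 / 2 := by linarith [norm_le_norm_sub_add y c]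
    have hlow : 1 / 2 ≤ ballWeight y := le_max_of_le_left (by nlinarith [norm_nonneg y])
    linarith [ballWeight_le_one ((4 : ℝ) • (y - c))]

lemma hasDerivAt_max_zero_sq (s : ℝ) : HasDerivAt (fun t : ℝ => max t 0 ^ 2) (2 * max s 0) s := by
  refine hasDerivAt_iff_isLittleO.2 (IsBigO.trans_isLittleO ?_
    (isLittleO_pow_sub_sub s one_lt_two))
  refine IsBigO.of_bound' (Eventually.of_forall fun t => ?_)
  simp only [Real.norm_eq_abs, sq_abs, abs_sq, smul_eq_mul]
  rcases max_cases t 0 with ⟨ht, ht'⟩ | ⟨ht, ht'⟩ <;>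
    rcases max_cases s 0 with ⟨hs, hs'⟩ | ⟨hs, hs'⟩ <;>
    rw [ht, hs, abs_le] <;> constructor <;> nlinarith

lemma hasFDerivAt_ballWeight_sq (y : E) :
    HasFDerivAt (fun y : E => ballWeight y ^ 2) (-(4 * ballWeight y) • innerSL ℝ y) y := by
  have h := (hasDerivAt_max_zero_sq (1 - ‖y‖ ^ 2)).comp_hasFDerivAt y
    ((hasStrictFDerivAt_norm_sq y).hasFDerivAt.const_sub 1)
  refine h.congr_fderiv ?_
  ext z
  simp [ballWeight]
  ring

variable [FiniteDimensional ℝ E] [MeasurableSpace E] [BorelSpace E]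

lemma integrable_ballWeight_mul {f : E → ℝ} (hf : Continuous f) :
    Integrable (fun y => ballWeight y * f y) :=
  (continuous_ballWeight.mul hf).integrable_of_hasCompactSupport
    hasCompactSupport_ballWeight.mul_right

lemma integrable_ballWeight_sq_mul {f : E → ℝ} (hf : Continuous f) :
    Integrable (fun y => ballWeight y ^ 2 * f y) := by
  simpa only [sq, mul_assoc] using
    integrable_ballWeight_mul (f := fun y => ballWeight y * f y) (continuous_ballWeight.mul hf)

lemma integral_ballWeight_pos : 0 < ∫ y : E, ballWeight y :=
  continuous_ballWeight.integral_pos_of_hasCompactSupport_nonneg_nonzero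
    hasCompactSupport_ballWeight ballWeight_nonneg (x := 0) (by simp [ballWeight])

lemma integral_ballWeight_mul_inner_mul {f : E → ℝ} (hf : ContDiff ℝ 1 f) (e : E) :
    ∫ y, ballWeight y * (⟪e, y⟫_ℝ * f y) = 4⁻¹ * ∫ y, ballWeight y ^ 2 * fderiv ℝ f y e := by
  have hfderiv : ∀ y : E, fderiv ℝ (fun y : E => ballWeight y ^ 2) y e =
      -4 * (ballWeight y * ⟪e, y⟫_ℝ) := fun y => by
    simp [(hasFDerivAt_ballWeight_sq y).fderiv, real_inner_comm e y]; ring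
  have hf' : Continuous fun y => fderiv ℝ f y e :=
    (hf.continuous_fderiv (by simp)).clm_apply continuous_const
  have hint : Integrable fun y => ballWeight y * (⟪e, y⟫_ℝ * f y) :=
    integrable_ballWeight_mul ((continuous_const.inner continuous_id).mul hf.continuous)
  have hparts := integral_mul_fderiv_eq_neg_fderiv_mul_of_integrable (μ := volume) (v := e)
    (f := fun y : E => ballWeight y ^ 2) (g := f)
    (by simpa only [hfderiv, mul_assoc] using hint.const_mul (-4))
    (integrable_ballWeight_sq_mul hf') (integrable_ballWeight_sq_mul hf.continuous)
    (fun y _ => (hasFDerivAt_ballWeight_sq y).differentiableAt)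
    (fun y _ => hf.differentiable (by simp) y)
  simp only [hfderiv, mul_assoc] at hparts
  rw [hparts, integral_const_mul]
  ring

/-- The average of `w` over the ball of centre `x` and radius `r`, with density proportional to
`ballWeight ((· - x) / r)`. -/
noncomputable def ballAverage (w : E → ℝ) (x : E) (r : ℝ) : ℝ :=
  (∫ y : E, ballWeight y)⁻¹ * ∫ y, ballWeight y * w (x + r • y)

lemma hasDerivAt_ballAverage {w : E → ℝ} (hw : ContDiff ℝ 1 w) (x : E) (r : ℝ) :
    HasDerivAt (ballAverage w x)
      ((∫ y : E, ballWeight y)⁻¹ * ∫ y, ballWeight y * fderiv ℝ w (x + r • y) y) r := by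
  have hcont : Continuous fun q : ℝ × E => fderiv ℝ w (x + q.1 • q.2) q.2 :=
    ((hw.continuous_fderiv (by simp)).comp (by fun_prop)).clm_apply continuous_snd
  obtain ⟨C, hC⟩ := ((isCompact_closedBall r 1).prod
    (isCompact_closedBall (0 : E) 1)).exists_bound_of_continuousOn hcont.continuousOn
  have hF : ∀ s : ℝ, Integrable fun y => ballWeight y * w (x + s • y) := fun s =>
    integrable_ballWeight_mul (hw.continuous.comp (by fun_prop))
  have hF' : Integrable fun y => ballWeight y * fderiv ℝ w (x + r • y) y :=
    integrable_ballWeight_mul (hcont.comp (Continuous.prodMk_right r))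
  refine (hasDerivAt_integral_of_dominated_loc_of_deriv_le (bound := fun y => ballWeight y * C)
    (F' := fun s y => ballWeight y * fderiv ℝ w (x + s • y) y)
    (closedBall_mem_nhds r one_pos) (Eventually.of_forall fun s => (hF s).aestronglyMeasurable)
    (hF r) hF'.aestronglyMeasurable (Eventually.of_forall fun y s hs => ?_)
    (integrable_ballWeight_mul continuous_const)
    (Eventually.of_forall fun y s _ => ?_)).2.const_mul _
  · rw [norm_mul, Real.norm_of_nonneg (ballWeight_nonneg y)]
    rcases le_total ‖y‖ 1 with hy | hy
    · exact mul_le_mul_of_nonneg_left (hC (s, y) ⟨hs, by simpa using hy⟩) (ballWeight_nonneg y)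
    · simp [ballWeight_eq_zero hy]
  · have hline : HasDerivAt (fun s : ℝ => x + s • y) y s := by
      simpa using ((hasDerivAt_id s).smul_const y).const_add x
    exact (((hw.differentiable (by simp) _).hasFDerivAt.comp_hasDerivAt s hline)).const_mul _

lemma integral_ballWeight_mul_fderiv {w : E → ℝ} (hw : ContDiff ℝ 2 w) (x : E) (r : ℝ) :
    ∫ y, ballWeight y * fderiv ℝ w (x + r • y) y =
      r / 4 * ∫ y, ballWeight y ^ 2 * Δ w (x + r • y) := by
  set b := stdOrthonormalBasis ℝ E
  have hC1 : ∀ i, ContDiff ℝ 1 fun z => fderiv ℝ w z (b i) := fun i =>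
    (hw.fderiv_right (m := 1) (by norm_num)).clm_apply contDiff_const
  have hC1' : ∀ i, ContDiff ℝ 1 fun y : E => fderiv ℝ w (x + r • y) (b i) := fun i =>
    (hC1 i).comp (g := fun z => fderiv ℝ w z (b i)) (by fun_prop)
  have hchain : ∀ i y, fderiv ℝ (fun y : E => fderiv ℝ w (x + r • y) (b i)) y (b i) =
      r * fderiv ℝ (fun z => fderiv ℝ w z (b i)) (x + r • y) (b i) := fun i y => by
    have haff : HasFDerivAt (fun y : E => x + r • y) (r • ContinuousLinearMap.id ℝ E) y :=
      ((hasFDerivAt_id y).const_smul r).const_add x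
    have := ((hC1 i).differentiable (by simp) (x + r • y)).hasFDerivAt.comp y haff
    simpa [Function.comp_def] using congrArg (· (b i)) this.fderiv
  calc ∫ y, ballWeight y * fderiv ℝ w (x + r • y) y
      = ∫ y, ∑ i, ballWeight y * (⟪b i, y⟫_ℝ * fderiv ℝ w (x + r • y) (b i)) := by
        have hcoord : ∀ (L : E →L[ℝ] ℝ) (y : E), L y = ∑ i, ⟪b i, y⟫_ℝ * L (b i) := fun L y => by
          conv_lhs => rw [← b.sum_repr' y]
          simp
        simp only [fun y => hcoord (fderiv ℝ w (x + r • y)) y, Finset.mul_sum]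
    _ = ∑ i, ∫ y, ballWeight y * (⟪b i, y⟫_ℝ * fderiv ℝ w (x + r • y) (b i)) :=
        integral_finsetSum _ fun i _ => integrable_ballWeight_mul
          ((continuous_const.inner continuous_id).mul (hC1' i).continuous)
    _ = ∑ i, r / 4 * ∫ y, ballWeight y ^ 2 *
          fderiv ℝ (fun z => fderiv ℝ w z (b i)) (x + r • y) (b i) := by
        refine Finset.sum_congr rfl fun i _ => ?_
        rw [integral_ballWeight_mul_inner_mul (hC1' i)]
        simp only [hchain, mul_left_comm _ r, integral_const_mul]
        ring
    _ = r / 4 * ∫ y, ballWeight y ^ 2 * Δ w (x + r • y) := by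
        rw [← Finset.mul_sum, ← integral_finsetSum]
        · simp only [← Finset.mul_sum, ← laplacian_eq_sum_fderiv_fderiv b hw.contDiffAt]
        · exact fun i _ => integrable_ballWeight_sq_mul
            ((((hC1 i).continuous_fderiv (by simp)).comp (by fun_prop)).clm_apply continuous_const)

end BallAverage

section MeanValue

variable {E : Type*} [NormedAddCommGroup E] [InnerProductSpace ℝ E] [FiniteDimensional ℝ E]

lemma exists_contDiff_eventuallyEq_nhdsSet {s : Set E} (hs : IsClosed s) {w : E → ℝ}
    (hw : ∀ x ∈ s, ContDiffAt ℝ 2 w x) : ∃ v : E → ℝ, ContDiff ℝ 2 v ∧ v =ᶠ[𝓝ˢ s] w := by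
  have hopen : IsOpen {x | ContDiffAt ℝ 2 w x} :=
    isOpen_iff_mem_nhds.2 fun x (hx : ContDiffAt ℝ 2 w x) =>
      hx.eventually (by simp)
  obtain ⟨u, hu, hsu, huw⟩ := normal_exists_closure_subset hs hopen hw
  obtain ⟨f, hfs, hfu, -⟩ := exists_contMDiffMap_one_nhds_of_subset_interior (n := 2)
    (modelWithCornersSelf ℝ E) hs (t := closure u) (hsu.trans hu.subset_interior_closure)
  refine ⟨fun x => f x * w x, contDiff_iff_contDiffAt.2 fun x => ?_, ?_⟩
  · by_cases hx : x ∈ closure u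
    · exact f.contMDiff.contDiff.contDiffAt.mul (huw hx)
    · refine (contDiffAt_const (c := (0 : ℝ))).congr_of_eventuallyEq ?_
      filter_upwards [isClosed_closure.isOpen_compl.mem_nhds hx] with y hy
      simp [hfu y hy]
  · filter_upwards [hfs] with y hy
    simp [hy]

variable [MeasurableSpace E] [BorelSpace E]

lemma integrable_ballWeight_mul_comp {w : E → ℝ} {x : E} {r : ℝ} (hr : 0 ≤ r)
    (hw : ContinuousOn w (closedBall x r)) :
    Integrable fun y : E => ballWeight y * w (x + r • y) := by
  have hmaps : MapsTo (fun y : E => x + r • y) (closedBall 0 1) (closedBall x r) := fun y hy => by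
    simpa [norm_smul, abs_of_nonneg hr] using
      mul_le_of_le_one_right hr (by simpa using hy)
  refine (integrableOn_iff_integrable_of_support_subset (s := closedBall (0 : E) 1) ?_).1
    ((continuous_ballWeight.continuousOn.mul (hw.comp (by fun_prop) hmaps)).integrableOn_compact
      (isCompact_closedBall 0 1))
  intro y hy
  contrapose! hy
  have hy' : 1 < ‖y‖ := by simpa using hy
  simp [ballWeight_eq_zero hy'.le]

lemma ballAverage_congr {w v : E → ℝ} {x : E} {r : ℝ} (hr : 0 ≤ r)
    (h : EqOn w v (closedBall x r)) : ballAverage w x r = ballAverage v x r := by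
  unfold ballAverage
  congr 2 with y
  exact (ballWeight_mul_comp_le_ballWeight_mul_comp hr (fun z hz => (h hz).le) y).antisymm
    (ballWeight_mul_comp_le_ballWeight_mul_comp hr (fun z hz => (h hz).ge) y)

lemma ballAverage_le_ballAverage_add {w v : E → ℝ} {x : E} {r δ : ℝ} (hr : 0 ≤ r)
    (hw : ContinuousOn w (closedBall x r)) (hv : ContinuousOn v (closedBall x r))
    (h : ∀ z ∈ closedBall x r, w z ≤ v z + δ) :
    ballAverage w x r ≤ ballAverage v x r + δ := by
  have hχ := integral_ballWeight_pos (E := E)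
  have hδ : Integrable fun y : E => ballWeight y * δ := integrable_ballWeight_mul continuous_const
  have hle : ∫ y, ballWeight y * w (x + r • y) ≤
      (∫ y, ballWeight y * v (x + r • y)) + (∫ y : E, ballWeight y) * δ := by
    rw [← integral_mul_const, ← integral_add (integrable_ballWeight_mul_comp hr hv) hδ]
    refine integral_mono (integrable_ballWeight_mul_comp hr hw)
      ((integrable_ballWeight_mul_comp hr hv).add hδ) fun y => ?_
    simpa [mul_add] using ballWeight_mul_comp_le_ballWeight_mul_comp hr h y
  calc ballAverage w x r
      ≤ (∫ y : E, ballWeight y)⁻¹ *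
          ((∫ y, ballWeight y * v (x + r • y)) + (∫ y : E, ballWeight y) * δ) :=
        mul_le_mul_of_nonneg_left hle (inv_nonneg.2 hχ.le)
    _ = ballAverage v x r + δ := by
        rw [mul_add, inv_mul_cancel_left₀ hχ.ne', ballAverage]

lemma ballAverage_neg (w : E → ℝ) (x : E) (r : ℝ) :
    ballAverage (-w) x r = -ballAverage w x r := by
  simp [ballAverage, integral_neg]

lemma ballAverage_zero (w : E → ℝ) (x : E) : ballAverage w x 0 = w x := by
  simp [ballAverage, integral_mul_const, inv_mul_cancel_left₀ integral_ballWeight_pos.ne']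

lemma neg_mul_integral_ballWeight_le {v : E → ℝ} (hv : ContDiff ℝ 2 v) {x : E} {r L : ℝ}
    (hr : 0 ≤ r) (hL : 0 ≤ L) (hvL : ∀ z ∈ closedBall x r, -L ≤ Δ v z) :
    -L * ∫ y : E, ballWeight y ≤ ∫ y, ballWeight y ^ 2 * Δ v (x + r • y) := by
  have hint : Integrable (ballWeight : E → ℝ) := by
    simpa using integrable_ballWeight_mul (E := E) (continuous_const (y := (1 : ℝ)))
  rw [← integral_const_mul]
  refine integral_mono (hint.const_mul (-L))
    (integrable_ballWeight_sq_mul ((continuous_laplacian hv).comp (by fun_prop))) fun y => ?_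
  have hsq : ballWeight y * ballWeight y ≤ ballWeight y :=
    mul_le_of_le_one_left (ballWeight_nonneg y) (ballWeight_le_one y)
  calc -L * ballWeight y ≤ ballWeight y * (ballWeight y * -L) := by nlinarith
    _ ≤ ballWeight y * (ballWeight y * Δ v (x + r • y)) :=
        mul_le_mul_of_nonneg_left
          (ballWeight_mul_comp_le_ballWeight_mul_comp (w := fun _ => -L) hr hvL y)
          (ballWeight_nonneg y)
    _ = ballWeight y ^ 2 * Δ v (x + r • y) := by ring

lemma le_ballAverage_add_of_contDiff {v : E → ℝ} (hv : ContDiff ℝ 2 v) {x : E} {R L : ℝ}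
    (hR : 0 ≤ R) (hL : 0 ≤ L) (hvL : ∀ z ∈ closedBall x R, -L ≤ Δ v z) :
    v x ≤ ballAverage v x R + L * R ^ 2 / 8 := by
  set I := ∫ y : E, ballWeight y
  have hI : 0 < I := integral_ballWeight_pos
  have hderiv : ∀ r, HasDerivAt (fun r => ballAverage v x r + L * r ^ 2 / 8)
      (I⁻¹ * (r / 4 * ∫ y, ballWeight y ^ 2 * Δ v (x + r • y)) + L * r / 4) r := fun r => by
    rw [← integral_ballWeight_mul_fderiv hv]
    exact (hasDerivAt_ballAverage (hv.of_le (by norm_num)) x r).add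
      ((((hasDerivAt_pow 2 r).const_mul L).div_const 8).congr_deriv (by norm_num; ring))
  have hmono : MonotoneOn (fun r => ballAverage v x r + L * r ^ 2 / 8) (Icc 0 R) := by
    refine monotoneOn_of_deriv_nonneg (convex_Icc 0 R)
      (fun r _ => (hderiv r).continuousAt.continuousWithinAt)
      (fun r _ => (hderiv r).differentiableAt.differentiableWithinAt) fun r hr => ?_
    rw [interior_Icc] at hr
    have hlow := neg_mul_integral_ballWeight_le hv hr.1.le hL
      fun z hz => hvL z (closedBall_subset_closedBall hr.2.le hz)
    rw [(hderiv r).deriv]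
    calc (0 : ℝ) = I⁻¹ * (r / 4 * (-L * I)) + L * r / 4 := by field_simp; ring
      _ ≤ _ := by gcongr; exact div_nonneg hr.1.le (by norm_num)
  simpa [ballAverage_zero] using hmono (left_mem_Icc.2 hR) (right_mem_Icc.2 hR) hR

theorem le_ballAverage_add {w : E → ℝ} {x : E} {R L : ℝ} (hR : 0 ≤ R) (hL : 0 ≤ L)
    (hw : ∀ z ∈ closedBall x R, ContDiffAt ℝ 2 w z) (hwL : ∀ z ∈ closedBall x R, -L ≤ Δ w z) :
    w x ≤ ballAverage w x R + L * R ^ 2 / 8 := by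
  obtain ⟨v, hv, hvw⟩ := exists_contDiff_eventuallyEq_nhdsSet isClosed_closedBall hw
  have heq : ∀ z ∈ closedBall x R, v =ᶠ[𝓝 z] w := eventually_nhdsSet_iff_forall.1 hvw
  rw [← (heq x (mem_closedBall_self hR)).eq_of_nhds,
    ← ballAverage_congr hR fun z hz => (heq z hz).eq_of_nhds]
  refine le_ballAverage_add_of_contDiff hv hR hL fun z hz => ?_
  rw [(InnerProductSpace.laplacian_congr_nhds (heq z hz)).eq_of_nhds]
  exact hwL z hz

theorem ballAverage_le_of_laplacian_nonpos {w : E → ℝ} {x : E} {R : ℝ} (hR : 0 ≤ R)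
    (hw : ∀ z ∈ closedBall x R, ContDiffAt ℝ 2 w z) (hwL : ∀ z ∈ closedBall x R, Δ w z ≤ 0) :
    ballAverage w x R ≤ w x := by
  have h := le_ballAverage_add (w := -w) hR le_rfl (fun z hz => (hw z hz).neg) fun z hz => by
    simpa [InnerProductSpace.laplacian_neg] using hwL z hz
  rw [ballAverage_neg] at h
  simp only [Pi.neg_apply] at h
  linarith

lemma integral_ballWeight_mul_eq_smul_integral (w : E → ℝ) (x y : E) {R : ℝ} (hR : 0 < R) :
    ∫ η, ballWeight η * w (y + (R / 4) • η) =
      4 ^ finrank ℝ E * ∫ η, ballWeight ((4 : ℝ) • (η - R⁻¹ • (y - x))) * w (x + R • η) := by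
  have hscale := Measure.integral_comp_smul (volume : Measure E)
    (fun η => ballWeight η * w (y + (R / 4) • η)) (4 : ℝ)
  rw [abs_of_pos (by positivity), smul_eq_mul, eq_inv_mul_iff_mul_eq₀ (by positivity)] at hscale
  rw [← hscale, ← integral_sub_right_eq_self _ (R⁻¹ • (y - x))]
  congr 2 with η
  congr 2
  rw [smul_smul, smul_sub, smul_smul, div_mul_cancel₀ R four_ne_zero, mul_inv_cancel₀ hR.ne']
  module

theorem ballAverage_le_mul_ballAverage {w : E → ℝ} {x y : E} {R : ℝ} (hR : 0 < R)
    (hw : ContinuousOn w (closedBall x R)) (hw0 : ∀ z ∈ closedBall x R, 0 ≤ w z)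
    (hxy : dist y x ≤ R / 4) :
    ballAverage w y (R / 4) ≤ 2 * 4 ^ finrank ℝ E * ballAverage w x R := by
  have hc : ‖R⁻¹ • (y - x)‖ ≤ 1 / 4 := by
    rw [norm_smul, norm_inv, Real.norm_of_nonneg hR.le, ← dist_eq_norm, inv_mul_le_iff₀ hR]
    linarith
  have hpointwise : ∀ η : E,
      0 ≤ ballWeight ((4 : ℝ) • (η - R⁻¹ • (y - x))) * w (x + R • η) ∧
      ballWeight ((4 : ℝ) • (η - R⁻¹ • (y - x))) * w (x + R • η) ≤
        2 * (ballWeight η * w (x + R • η)) := fun η => by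
    have hχ := ballWeight_four_smul_sub_le hc η
    have hχ0 := ballWeight_nonneg ((4 : ℝ) • (η - R⁻¹ • (y - x)))
    rcases le_total 1 ‖η‖ with hη | hη
    · rw [ballWeight_eq_zero hη] at hχ ⊢
      simp [le_antisymm (by simpa using hχ) hχ0]
    · have hw' : 0 ≤ w (x + R • η) := hw0 _ (by
        simpa [norm_smul, abs_of_pos hR] using mul_le_of_le_one_right hR.le hη)
      exact ⟨mul_nonneg hχ0 hw', by rw [← mul_assoc]; exact mul_le_mul_of_nonneg_right hχ hw'⟩
  have hle : ∫ η, ballWeight ((4 : ℝ) • (η - R⁻¹ • (y - x))) * w (x + R • η) ≤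
      2 * ∫ η, ballWeight η * w (x + R • η) := by
    rw [← integral_const_mul]
    exact integral_mono_of_nonneg (Eventually.of_forall fun η => (hpointwise η).1)
      ((integrable_ballWeight_mul_comp hR.le hw).const_mul 2)
      (Eventually.of_forall fun η => (hpointwise η).2)
  calc ballAverage w y (R / 4)
      = (∫ y : E, ballWeight y)⁻¹ * (4 ^ finrank ℝ E *
          ∫ η, ballWeight ((4 : ℝ) • (η - R⁻¹ • (y - x))) * w (x + R • η)) := by
        rw [ballAverage, integral_ballWeight_mul_eq_smul_integral w x y hR]
    _ ≤ (∫ y : E, ballWeight y)⁻¹ * (4 ^ finrank ℝ E *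
          (2 * ∫ η, ballWeight η * w (x + R • η))) := by
        have := integral_ballWeight_pos (E := E)
        gcongr
    _ = 2 * 4 ^ finrank ℝ E * ballAverage w x R := by rw [ballAverage]; ring

end MeanValue

section SmoothMax

/-- The convex regularisation `(δ ^ (1 + p) + s ^ (1 + p)) ^ (1 / (1 + p))` of `max δ s`. The
exponent is the one for which the derivative in `s` absorbs the singularity of `s ^ (-p)`. -/
noncomputable def smoothMax (p δ s : ℝ) : ℝ :=
  (δ ^ (1 + p) + s ^ (1 + p)) ^ (1 / (1 + p))

variable {p δ s : ℝ}

lemma smoothMax_comm : smoothMax p δ s = smoothMax p s δ := by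
  rw [smoothMax, smoothMax, add_comm (δ ^ (1 + p))]

lemma smoothMax_pos (hδ : 0 < δ) (hs : 0 ≤ s) : 0 < smoothMax p δ s := by
  unfold smoothMax; positivity

lemma smoothMax_rpow (hp : 1 + p ≠ 0) (hδ : 0 ≤ δ) (hs : 0 ≤ s) :
    smoothMax p δ s ^ (1 + p) = δ ^ (1 + p) + s ^ (1 + p) := by
  rw [smoothMax, one_div, Real.rpow_inv_rpow (by positivity) hp]

lemma le_smoothMax (hp : 0 < p) (hδ : 0 ≤ δ) (hs : 0 ≤ s) : s ≤ smoothMax p δ s := by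
  rw [smoothMax, one_div, Real.le_rpow_inv_iff_of_pos hs (by positivity) (by positivity)]
  exact le_add_of_nonneg_left (by positivity)

lemma smoothMax_le_add (hp : 0 < p) (hδ : 0 ≤ δ) (hs : 0 ≤ s) : smoothMax p δ s ≤ s + δ := by
  rw [smoothMax, one_div, Real.rpow_inv_le_iff_of_pos (by positivity) (by positivity)
    (by positivity), add_comm s]
  exact Real.add_rpow_le_rpow_add hδ hs (by linarith)

lemma smoothMax_add_mul_sub_le {t : ℝ} (hp : 0 < p) (hδ : 0 < δ) (hs : 0 ≤ s) (ht : 0 < t) :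
    smoothMax p δ t + t ^ p * smoothMax p δ t ^ (-p) * (s - t) ≤ smoothMax p δ s := by
  have hconj : (1 + p).HolderConjugate ((1 + p) / p) :=
    Real.holderConjugate_iff.2 ⟨by linarith, by field_simp⟩
  have hH : 0 < smoothMax p δ t := smoothMax_pos hδ ht.le
  have hpow : ∀ r : ℝ, 0 ≤ r → r * r ^ p = r ^ (1 + p) := fun r hr =>
    (Real.rpow_one_add' hr (by positivity)).symm
  have hHolder := Real.inner_le_Lp_mul_Lq_of_nonneg Finset.univ hconj
    (f := ![δ, s]) (g := ![δ ^ p, t ^ p])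
    (by simp [Fin.forall_fin_two, hδ.le, hs])
    (by simp [Fin.forall_fin_two, Real.rpow_nonneg, hδ.le, ht.le])
  simp only [Fin.sum_univ_two, Matrix.cons_val_zero, Matrix.cons_val_one] at hHolder
  rw [hpow δ hδ.le, ← Real.rpow_mul hδ.le, ← Real.rpow_mul ht.le,
    mul_div_cancel₀ _ hp.ne', ← smoothMax_rpow (by positivity) hδ.le ht.le, ← Real.rpow_mul hH.le,
    one_div_div, mul_div_cancel₀ p (by positivity : 1 + p ≠ 0)] at hHolder
  have hHt := smoothMax_rpow (p := p) (by positivity) hδ.le ht.le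
  rw [← hpow _ hH.le, ← hpow t ht.le] at hHt
  have hHp : 0 < smoothMax p δ t ^ p := by positivity
  rw [Real.rpow_neg hH.le]
  refine le_of_mul_le_mul_right ?_ hHp
  calc (smoothMax p δ t + t ^ p * (smoothMax p δ t ^ p)⁻¹ * (s - t)) * smoothMax p δ t ^ p
      = δ ^ (1 + p) + s * t ^ p := by
        field_simp
        linear_combination hHt
    _ ≤ smoothMax p δ s * smoothMax p δ t ^ p := hHolder

variable {E : Type*} [NormedAddCommGroup E] [InnerProductSpace ℝ E]

lemma contDiffAt_smoothMax_comp {v : E → ℝ} {z : E} (hδ : 0 < δ) (hv : ContDiffAt ℝ 2 v z)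
    (hz : 0 < v z) : ContDiffAt ℝ 2 (fun y => smoothMax p δ (v y)) z :=
  (contDiffAt_const.add (hv.rpow_const_of_ne hz.ne')).rpow_const_of_ne (by positivity)

lemma neg_mul_rpow_le_laplacian_smoothMax_comp [FiniteDimensional ℝ E] {v : E → ℝ} {z : E} {K : ℝ}
    (hp : 0 < p) (hδ : 0 < δ) (hK : 0 ≤ K) (hv : ContDiffAt ℝ 2 v z) (hz : 0 < v z)
    (hle : -Δ v z ≤ K * v z ^ (-p)) :
    -(K * δ ^ (-p)) ≤ Δ (fun y => smoothMax p δ (v y)) z := by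
  have hH : ContDiffAt ℝ 2 (fun y => smoothMax p δ (v y)) z := contDiffAt_smoothMax_comp hδ hv hz
  set D := v z ^ p * smoothMax p δ (v z) ^ (-p)
  have hD : 0 ≤ D := mul_nonneg (by positivity) (Real.rpow_nonneg (smoothMax_pos hδ hz.le).le _)
  have hmin : IsLocalMin ((fun y => smoothMax p δ (v y)) - D • v) z := by
    filter_upwards [hv.continuousAt.eventually (lt_mem_nhds hz)] with y hy
    have := smoothMax_add_mul_sub_le hp hδ hy.le hz
    simp only [Pi.sub_apply, Pi.smul_apply, smul_eq_mul]
    linarith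
  have hsum : 0 ≤ Δ (fun y => smoothMax p δ (v y)) z - D * Δ v z := by
    have hDv : ContDiffAt ℝ 2 (D • v) z := hv.const_smul D
    have : 0 ≤ Δ ((fun y => smoothMax p δ (v y)) - D • v) z :=
      laplacian_nonneg_of_isLocalMin (hH.sub hDv) hmin
    rwa [hH.laplacian_sub hDv, InnerProductSpace.laplacian_smul D hv] at this
  have hDK : D * (K * v z ^ (-p)) ≤ K * δ ^ (-p) := calc
    D * (K * v z ^ (-p)) = K * smoothMax p δ (v z) ^ (-p) := by
      simp only [D, Real.rpow_neg hz.le]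
      field_simp
    _ ≤ K * δ ^ (-p) := by
      refine mul_le_mul_of_nonneg_left (Real.rpow_le_rpow_of_nonpos hδ ?_ (by linarith)) hK
      exact smoothMax_comm (p := p) ▸ le_smoothMax hp hz.le hδ.le
  linarith [mul_le_mul_of_nonneg_left hle hD]

end SmoothMax

section Harnack

variable {E : Type*} [NormedAddCommGroup E] [InnerProductSpace ℝ E]

lemma norm_lineMap_mem_Icc {x y : E} {r t : ℝ} (hx : ‖x‖ = r) (hy : ‖y‖ = r)
    (hxy : 0 ≤ ⟪x, y⟫_ℝ) (ht : t ∈ Icc (0 : ℝ) 1) :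
    ‖AffineMap.lineMap x y t‖ ∈ Icc (r / 2) r := by
  have hr : 0 ≤ r := hx ▸ norm_nonneg x
  have hsq : ‖AffineMap.lineMap x y t‖ ^ 2 =
      ((1 - t) ^ 2 + t ^ 2) * r ^ 2 + 2 * ((1 - t) * t * ⟪x, y⟫_ℝ) := by
    rw [AffineMap.lineMap_apply_module, norm_add_sq_real, norm_smul, norm_smul,
      real_inner_smul_left, real_inner_smul_right, hx, hy, mul_pow, mul_pow, Real.norm_eq_abs,
      Real.norm_eq_abs, sq_abs, sq_abs]
    ring
  have hinner : 0 ≤ (1 - t) * t * ⟪x, y⟫_ℝ := mul_nonneg (mul_nonneg (sub_nonneg.2 ht.2) ht.1) hxy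
  constructor
  · refine (pow_le_pow_iff_left₀ (by positivity) (norm_nonneg _) two_ne_zero).1 ?_
    nlinarith [mul_nonneg (sq_nonneg r) (sq_nonneg (2 * t - 1)), sq_nonneg r]
  · refine mem_closedBall_zero_iff.1 ((convex_closedBall (0 : E) r).lineMap_mem ?_ ?_ ht)
      <;> simp [*]

lemma exists_norm_eq_inner_nonneg (hn : 2 ≤ finrank ℝ E) (x y : E) {r : ℝ} (hr : 0 ≤ r) :
    ∃ z : E, ‖z‖ = r ∧ 0 ≤ ⟪x, z⟫_ℝ ∧ 0 ≤ ⟪z, y⟫_ℝ := by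
  have hne : (ℝ ∙ x)ᗮ ≠ ⊥ := by
    rw [Ne, Submodule.orthogonal_eq_bot_iff]
    intro htop
    have := finrank_span_le_card (R := ℝ) ({x} : Set E)
    rw [htop, finrank_top, toFinset_singleton, Finset.card_singleton] at this
    omega
  obtain ⟨w, hw, hw0⟩ := Submodule.exists_mem_ne_zero_of_ne_bot hne
  have hxw : ⟪x, w⟫_ℝ = 0 := Submodule.mem_orthogonal_singleton_iff_inner_right.1 hw
  have hnorm : ‖(r / ‖w‖) • w‖ = r := by
    rw [norm_smul, Real.norm_of_nonneg (by positivity), div_mul_cancel₀ r (norm_ne_zero_iff.2 hw0)]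
  rcases le_total 0 ⟪(r / ‖w‖) • w, y⟫_ℝ with h | h
  · exact ⟨_, hnorm, by simp [real_inner_smul_right, hxw], h⟩
  · exact ⟨-((r / ‖w‖) • w), by rw [norm_neg, hnorm], by simp [real_inner_smul_right, hxw],
      by simpa only [inner_neg_left, neg_nonneg] using h⟩

variable [FiniteDimensional ℝ E]

/-- `v` is a positive `C²` solution of `0 ≤ -Δv ≤ K v^{-p}` on `s`, for a variable coefficient
`K`. All conditions are pointwise, so `s` need not be open. -/
structure IsSingularSuperharmonicOn (p : ℝ) (K : E → ℝ) (v : E → ℝ) (s : Set E) : Prop where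
  contDiffAt : ∀ z ∈ s, ContDiffAt ℝ 2 v z
  pos : ∀ z ∈ s, 0 < v z
  laplacian_nonpos : ∀ z ∈ s, Δ v z ≤ 0
  neg_laplacian_le : ∀ z ∈ s, -Δ v z ≤ K z * v z ^ (-p)

namespace IsSingularSuperharmonicOn

variable {p δ R r : ℝ} {v : E → ℝ} {x y : E} {s : Set E}

lemma mono {K L : E → ℝ} {t : Set E} (h : IsSingularSuperharmonicOn p K v s) (hts : t ⊆ s)
    (hKL : ∀ z ∈ t, K z ≤ L z) : IsSingularSuperharmonicOn p L v t where
  contDiffAt z hz := h.contDiffAt z (hts hz)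
  pos z hz := h.pos z (hts hz)
  laplacian_nonpos z hz := h.laplacian_nonpos z (hts hz)
  neg_laplacian_le z hz := (h.neg_laplacian_le z (hts hz)).trans <|
    mul_le_mul_of_nonneg_right (hKL z hz) (Real.rpow_nonneg (h.pos z (hts hz)).le _)

variable {K : ℝ}

lemma le_ballAverage_add_two_mul [MeasurableSpace E] [BorelSpace E]
    (h : IsSingularSuperharmonicOn p (fun _ => K) v (closedBall y r)) (hp : 0 < p) (hδ : 0 < δ)
    (hK : 0 ≤ K) (hr : 0 ≤ r) (hKr : K * r ^ 2 ≤ δ ^ (1 + p)) :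
    v y ≤ ballAverage v y r + 2 * δ := by
  have hH : ∀ z ∈ closedBall y r, ContDiffAt ℝ 2 (fun z => smoothMax p δ (v z)) z :=
    fun z hz => contDiffAt_smoothMax_comp hδ (h.contDiffAt z hz) (h.pos z hz)
  have hsub := le_ballAverage_add hr (by positivity : 0 ≤ K * δ ^ (-p)) hH fun z hz =>
    neg_mul_rpow_le_laplacian_smoothMax_comp hp hδ hK (h.contDiffAt z hz) (h.pos z hz)
      (h.neg_laplacian_le z hz)
  have hcomp := ballAverage_le_ballAverage_add hr
    (fun z hz => (hH z hz).continuousAt.continuousWithinAt)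
    (fun z hz => (h.contDiffAt z hz).continuousAt.continuousWithinAt)
    fun z hz => smoothMax_le_add hp hδ.le (h.pos z hz).le
  have herr : K * δ ^ (-p) * r ^ 2 ≤ δ := calc
    K * δ ^ (-p) * r ^ 2 = K * r ^ 2 * δ ^ (-p) := by ring
    _ ≤ δ ^ (1 + p) * δ ^ (-p) := by gcongr
    _ = δ := by rw [← Real.rpow_add hδ]; simp
  have hvy := le_smoothMax hp hδ.le (h.pos y (mem_closedBall_self hr)).le
  linarith

theorem add_two_mul_le_mul_of_dist_le
    (h : IsSingularSuperharmonicOn p (fun _ => K) v (closedBall x R)) (hp : 0 < p) (hδ : 0 < δ)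
    (hK : 0 ≤ K) (hR : 0 < R) (hKR : K * R ^ 2 ≤ δ ^ (1 + p)) (hxy : dist y x ≤ R / 4) :
    v y + 2 * δ ≤ 2 * 4 ^ finrank ℝ E * (v x + 2 * δ) := by
  borelize E
  have hsub : closedBall y (R / 4) ⊆ closedBall x R := closedBall_subset_closedBall' (by linarith)
  have hy := (h.mono hsub fun _ _ => le_rfl).le_ballAverage_add_two_mul hp hδ hK (by positivity)
    (hKR.trans' (by gcongr; linarith))
  have hyx := ballAverage_le_mul_ballAverage hR
    (fun z hz => (h.contDiffAt z hz).continuousAt.continuousWithinAt)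
    (fun z hz => (h.pos z hz).le) hxy
  have hx := ballAverage_le_of_laplacian_nonpos hR.le h.contDiffAt h.laplacian_nonpos
  have hpow : (1 : ℝ) ≤ 4 ^ finrank ℝ E := one_le_pow₀ (by norm_num)
  nlinarith [mul_le_mul_of_nonneg_left hx (by positivity : 0 ≤ 2 * (4 : ℝ) ^ finrank ℝ E)]

theorem add_two_mul_le_pow_mul_of_lineMap (h : IsSingularSuperharmonicOn p (fun _ => K) v s)
    (hp : 0 < p) (hδ : 0 < δ) (hK : 0 ≤ K) (hR : 0 < R) (hKR : K * R ^ 2 ≤ δ ^ (1 + p)) {m : ℕ}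
    (hxy : dist x y ≤ m * (R / 4))
    (hs : ∀ t ∈ Icc (0 : ℝ) 1, closedBall (AffineMap.lineMap x y t) R ⊆ s) :
    v y + 2 * δ ≤ (2 * 4 ^ finrank ℝ E) ^ m * (v x + 2 * δ) := by
  rcases m.eq_zero_or_pos with rfl | hm
  · obtain rfl : x = y := dist_le_zero.1 (by simpa using hxy)
    simp
  have hm' : (0 : ℝ) < m := by exact_mod_cast hm
  have hchain := le_geom (u := fun k : ℕ => v (AffineMap.lineMap x y (k / m : ℝ)) + 2 * δ)
    (c := 2 * 4 ^ finrank ℝ E) (by positivity) m fun k hk => by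
      have hk' : (k : ℝ) ≤ m := by exact_mod_cast hk.le
      refine (h.mono (hs (k / m) ⟨by positivity, (div_le_one hm').2 hk'⟩)
        fun _ _ => le_rfl).add_two_mul_le_mul_of_dist_le hp hδ hK hR hKR ?_
      rw [dist_lineMap_lineMap, Real.dist_eq, ← sub_div, Nat.cast_add_one, add_sub_cancel_left,
        abs_of_pos (by positivity), one_div, inv_mul_le_iff₀ hm']
      exact hxy
  simpa [hm'.ne'] using hchain

theorem le_mul_add_of_norm_eq {K δ r : ℝ} {x y : E} (hn : 2 ≤ finrank ℝ E)
    (h : IsSingularSuperharmonicOn p (fun _ => K) v (norm ⁻¹' Icc (r / 4) (2 * r)))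
    (hp : 0 < p) (hδ : 0 < δ) (hK : 0 ≤ K) (hr : 0 < r) (hKr : K * r ^ 2 ≤ δ ^ (1 + p))
    (hx : ‖x‖ = r) (hy : ‖y‖ = r) :
    v y ≤ ((2 * 4 ^ finrank ℝ E) ^ 32) ^ 2 * (v x + 2 * δ) := by
  set C : ℝ := (2 * 4 ^ finrank ℝ E) ^ 32
  have hstep : ∀ {a b : E}, ‖a‖ = r → ‖b‖ = r → 0 ≤ ⟪a, b⟫_ℝ →
      v b + 2 * δ ≤ C * (v a + 2 * δ) := fun {a b} ha hb hab => by
    refine h.add_two_mul_le_pow_mul_of_lineMap (R := r / 4) hp hδ hK (by positivity)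
      (hKr.trans' (by gcongr; linarith)) ?_ fun t ht z hz => ?_
    · have := dist_le_norm_add_norm a b
      push_cast
      linarith
    · obtain ⟨hlow, hupp⟩ := norm_lineMap_mem_Icc ha hb hab ht
      have hz' := mem_closedBall_iff_norm.1 hz
      have hdist := abs_le.1 ((abs_norm_sub_norm_le _ _).trans hz')
      exact ⟨by linarith [hdist.1], by linarith [hdist.2]⟩
  obtain ⟨z, hz, hxz, hzy⟩ := exists_norm_eq_inner_nonneg hn x y hr.le
  calc v y ≤ v y + 2 * δ := by linarith
    _ ≤ C * (v z + 2 * δ) := hstep hz hy hzy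
    _ ≤ C * (C * (v x + 2 * δ)) := by gcongr; exact hstep hx hz hxz
    _ = C ^ 2 * (v x + 2 * δ) := by ring

theorem exists_forall_le_mul_add_rpow (hn : 2 ≤ finrank ℝ E) (hp : 0 < p) {c : ℝ} (hc : 0 < c)
    (e : ℝ) : ∃ A D : ℝ, ∀ (v : E → ℝ) (r : ℝ), 0 < r →
      IsSingularSuperharmonicOn p (fun z => c * ‖z‖ ^ e) v (norm ⁻¹' Icc (r / 4) (2 * r)) →
      ∀ x y : E, ‖x‖ = r → ‖y‖ = r → v y ≤ A * (v x + D * r ^ ((2 + e) / (1 + p))) := by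
  set M : ℝ := max ((1 / 4) ^ e) (2 ^ e)
  have : 0 < M := lt_max_of_lt_right (by positivity)
  refine ⟨((2 * 4 ^ finrank ℝ E) ^ 32) ^ 2, 2 * (c * M) ^ (1 + p)⁻¹, fun v r hr h x y hx hy => ?_⟩
  have hweight : ∀ z ∈ (norm ⁻¹' Icc (r / 4) (2 * r) : Set E),
      c * ‖z‖ ^ e ≤ c * (M * r ^ e) := by
    intro z ⟨hz1, hz2⟩
    have hquot : ‖z‖ ^ e = (‖z‖ / r) ^ e * r ^ e := by
      rw [← Real.mul_rpow (by positivity) hr.le, div_mul_cancel₀ _ hr.ne']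
    rw [hquot]
    gcongr
    rcases le_total 0 e with he | he
    · exact le_max_of_le_right <| Real.rpow_le_rpow (by positivity) ((div_le_iff₀ hr).2 hz2) he
    · exact le_max_of_le_left <| Real.rpow_le_rpow_of_nonpos (by norm_num)
        ((le_div_iff₀ hr).2 (by linarith)) he
  have key := (h.mono subset_rfl hweight).le_mul_add_of_norm_eq hn hp
    (δ := (c * M) ^ (1 + p)⁻¹ * r ^ ((2 + e) / (1 + p))) (by positivity) (by positivity) hr ?_ hx hy
  · linarith
  · rw [Real.mul_rpow (by positivity) (by positivity), Real.rpow_inv_rpow (by positivity)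
      (by positivity), ← Real.rpow_mul hr.le, div_mul_cancel₀ _ (by positivity),
      Real.rpow_add hr, Real.rpow_two]
    exact le_of_eq (by ring)

end IsSingularSuperharmonicOn

end Harnack

section MaximumPrinciple

variable {E : Type*} [NormedAddCommGroup E] [InnerProductSpace ℝ E] [FiniteDimensional ℝ E]
  {w : E → ℝ}

lemma nonneg_of_laplacian_neg_of_norm_mem_Icc {R S : ℝ}
    (hw : ∀ x, ‖x‖ ∈ Icc R S → ContDiffAt ℝ 2 w x)
    (hR : ∀ x, ‖x‖ = R → 0 ≤ w x) (hS : ∀ x, ‖x‖ = S → 0 ≤ w x)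
    (hΔ : ∀ x, ‖x‖ ∈ Icc R S → w x < 0 → Δ w x < 0) {x : E} (hx : ‖x‖ ∈ Icc R S) : 0 ≤ w x := by
  by_contra! hneg
  have hcompact : IsCompact (norm ⁻¹' Icc R S : Set E) :=
    (isCompact_closedBall (0 : E) S).of_isClosed_subset (isClosed_Icc.preimage continuous_norm)
      fun z hz => mem_closedBall_zero_iff.2 hz.2
  obtain ⟨z, hz, hmin⟩ := hcompact.exists_isMinOn ⟨x, hx⟩
    fun y hy => (hw y hy).continuousAt.continuousWithinAt
  have hzneg : w z < 0 := (hmin hx).trans_lt hneg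
  have hnhds : norm ⁻¹' Icc R S ∈ 𝓝 z := continuous_norm.continuousAt.preimage_mem_nhds <|
    Icc_mem_nhds (hz.1.lt_of_ne fun h => (hR z h.symm).not_gt hzneg)
      (hz.2.lt_of_ne fun h => (hS z h).not_gt hzneg)
  exact (laplacian_nonneg_of_isLocalMin (hw z hz) (hmin.isLocalMin hnhds)).not_gt (hΔ z hz hzneg)

theorem nonneg_of_laplacian_neg_of_ne_zero (hw : ContDiffOn ℝ 2 w {0}ᶜ)
    (h0 : ∀ᶠ x in 𝓝[≠] (0 : E), 0 ≤ w x) (hinf : ∀ᶠ x in cobounded E, 0 ≤ w x)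
    (hΔ : ∀ x ≠ 0, w x < 0 → Δ w x < 0) {x : E} (hx : x ≠ 0) : 0 ≤ w x := by
  rw [← comap_norm_nhdsGT_zero, eventually_comap] at h0
  rw [← comap_norm_atTop, eventually_comap] at hinf
  have hnorm : 0 < ‖x‖ := norm_pos_iff.2 hx
  obtain ⟨R, hRw, hR0, hRx⟩ := (h0.and (Ioo_mem_nhdsGT hnorm)).exists
  obtain ⟨S, hSw, hxS⟩ := (hinf.and (eventually_gt_atTop ‖x‖)).exists
  have hne : ∀ y : E, ‖y‖ ∈ Icc R S → y ≠ 0 := fun y hy => norm_pos_iff.1 (hR0.trans_le hy.1)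
  exact nonneg_of_laplacian_neg_of_norm_mem_Icc
    (fun y hy => hw.contDiffAt (isOpen_compl_singleton.mem_nhds (hne y hy))) hRw hSw
    (fun y hy => hΔ y (hne y hy)) ⟨hRx.le, hxS.le⟩

end MaximumPrinciple

section NonnegConcave

variable {m : ℝ → ℝ}

lemma monotoneOn_Ioi_of_concaveOn_of_nonneg (hm : ConcaveOn ℝ (Ioi 0) m)
    (h0 : ∀ s, 0 < s → 0 ≤ m s) : MonotoneOn m (Ioi 0) := by
  intro s hs r hr hsr
  by_contra! hlt
  replace hsr : s < r := hsr.lt_of_ne (by rintro rfl; exact hlt.false)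
  set d := (m s - m r) / (r - s)
  have hd : 0 < d := div_pos (by linarith) (by linarith)
  set t := r + (m r / d + 1)
  have hrt : 0 < m r / d + 1 := by have := h0 r hr; positivity
  have ht : t ∈ Ioi (0 : ℝ) := (add_pos hr hrt : 0 < t)
  have hslope := hm.slope_anti_adjacent hs ht hsr (lt_add_of_pos_right r hrt)
  rw [← neg_sub (m s), neg_div, add_sub_cancel_left, div_le_iff₀ hrt] at hslope
  have : -d * (m r / d + 1) = -m r - d := by field_simp; ring
  linarith [h0 t ht]

lemma exists_le_and_tendsto_nhdsGT_zero_of_concaveOn (hm : ConcaveOn ℝ (Ioi 0) m)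
    (h0 : ∀ s, 0 < s → 0 ≤ m s) :
    ∃ b, 0 ≤ b ∧ (∀ s, 0 < s → b ≤ m s) ∧ Tendsto m (𝓝[>] 0) (𝓝 b) := by
  have hbdd : BddBelow (m '' Ioi 0) := ⟨0, forall_mem_image.2 h0⟩
  exact ⟨sInf (m '' Ioi 0), le_csInf (nonempty_Ioi.image m) (forall_mem_image.2 h0),
    fun s hs => csInf_le hbdd (mem_image_of_mem m hs),
    (monotoneOn_Ioi_of_concaveOn_of_nonneg hm h0).tendsto_nhdsGT hbdd⟩

lemma concaveOn_Ioi_mul_comp_inv (hm : ConcaveOn ℝ (Ioi 0) m) :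
    ConcaveOn ℝ (Ioi 0) fun s => s * m s⁻¹ := by
  refine ⟨convex_Ioi 0, fun s (hs : 0 < s) r (hr : 0 < r) a b ha hb hab => ?_⟩
  simp only [smul_eq_mul]
  have ht : 0 < a * s + b * r := by
    rcases ha.eq_or_lt with rfl | ha
    · simpa [(zero_add b).symm.trans hab] using hr
    · positivity
  have hconc := hm.2 (inv_pos.2 hs : s⁻¹ ∈ Ioi 0) (inv_pos.2 hr : r⁻¹ ∈ Ioi 0)
    (by positivity : 0 ≤ a * s / (a * s + b * r)) (by positivity : 0 ≤ b * r / (a * s + b * r))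
    (by field_simp)
  simp only [smul_eq_mul] at hconc
  have hinv : a * s / (a * s + b * r) * s⁻¹ + b * r / (a * s + b * r) * r⁻¹ =
      (a * s + b * r)⁻¹ := by
    field_simp
    exact hab
  rw [hinv] at hconc
  calc a * (s * m s⁻¹) + b * (r * m r⁻¹)
      = (a * s + b * r) *
          (a * s / (a * s + b * r) * m s⁻¹ + b * r / (a * s + b * r) * m r⁻¹) := by field_simp
    _ ≤ (a * s + b * r) * m (a * s + b * r)⁻¹ := by gcongr

theorem exists_affine_le_and_tendsto_of_concaveOn (hm : ConcaveOn ℝ (Ioi 0) m)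
    (h0 : ∀ s, 0 < s → 0 ≤ m s) :
    ∃ a b, 0 ≤ a ∧ 0 ≤ b ∧ (∀ s, 0 < s → a * s + b ≤ m s) ∧
      Tendsto (fun s => m s / s) atTop (𝓝 a) ∧ Tendsto m (𝓝[>] 0) (𝓝 b) := by
  obtain ⟨b, hb, hbm, hlimb⟩ := exists_le_and_tendsto_nhdsGT_zero_of_concaveOn hm h0
  obtain ⟨a, ha, ham, hlima⟩ := exists_le_and_tendsto_nhdsGT_zero_of_concaveOn
    (concaveOn_Ioi_mul_comp_inv (hm.sub (convexOn_const b (convex_Ioi 0))))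
    fun s hs => mul_nonneg hs.le (sub_nonneg.2 (hbm s⁻¹ (inv_pos.2 hs)))
  refine ⟨a, b, ha, hb, fun s hs => ?_, ?_, hlimb⟩
  · have := ham s⁻¹ (inv_pos.2 hs)
    rw [inv_inv, Pi.sub_apply, le_inv_mul_iff₀ hs] at this
    linarith
  · have hsum := (hlima.comp tendsto_inv_atTop_nhdsGT_zero).add
      ((tendsto_const_nhds (x := b)).div_atTop tendsto_id)
    rw [add_zero] at hsum
    refine hsum.congr fun s => ?_
    simp only [Function.comp_apply, Pi.sub_apply, inv_inv, id]
    ring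

end NonnegConcave

section SphereMin

variable {E : Type*} [NormedAddCommGroup E]

/-- The minimum of `u` on the sphere `|x| = r`, written as an infimum; it is attained when `r > 0`
and `u` is continuous away from the origin. -/
noncomputable def sphereMin (u : E → ℝ) (r : ℝ) : ℝ :=
  sInf (u '' sphere 0 r)

variable [InnerProductSpace ℝ E] {u : E → ℝ}

lemma contDiffAt_sub_radialHarmonic (hu : ContDiffOn ℝ 2 u {0}ᶜ) (a b : ℝ) {x : E} (hx : x ≠ 0) :
    ContDiffAt ℝ 2 (u - radialHarmonic a b) x :=
  (hu.contDiffAt (isOpen_compl_singleton.mem_nhds hx)).sub (contDiffAt_radialHarmonic a b hx)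

variable [FiniteDimensional ℝ E]

lemma isCompact_image_sphere (hu : ContinuousOn u {0}ᶜ) {r : ℝ} (hr : 0 < r) :
    IsCompact (u '' sphere 0 r) :=
  (isCompact_sphere 0 r).image_of_continuousOn <| hu.mono fun x hx =>
    ne_zero_of_mem_sphere hr.ne' ⟨x, hx⟩

lemma sphereMin_le (hu : ContinuousOn u {0}ᶜ) {x : E} (hx : x ≠ 0) : sphereMin u ‖x‖ ≤ u x :=
  csInf_le (isCompact_image_sphere hu (norm_pos_iff.2 hx)).bddBelow
    (mem_image_of_mem u (mem_sphere_zero_iff_norm.2 rfl))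

lemma exists_norm_eq_and_eq_sphereMin [Nontrivial E] (hu : ContinuousOn u {0}ᶜ) {r : ℝ}
    (hr : 0 < r) : ∃ x, ‖x‖ = r ∧ u x = sphereMin u r := by
  obtain ⟨x, hx, hux⟩ := (isCompact_image_sphere hu hr).sInf_mem
    ((NormedSpace.sphere_nonempty.2 hr.le).image u)
  exact ⟨x, mem_sphere_zero_iff_norm.1 hx, hux⟩

lemma laplacian_sub_radialHarmonic (hu : ContDiffOn ℝ 2 u {0}ᶜ) (a b : ℝ) {x : E} (hx : x ≠ 0) :
    Δ (u - radialHarmonic a b : E → ℝ) x = Δ u x := by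
  rw [(hu.contDiffAt (isOpen_compl_singleton.mem_nhds hx)).laplacian_sub
    (contDiffAt_radialHarmonic a b hx), laplacian_radialHarmonic a b hx, sub_zero]

lemma radialHarmonic_le_of_norm_mem_Icc {R S a b : ℝ} (hR : 0 < R) (hu : ContDiffOn ℝ 2 u {0}ᶜ)
    (hΔ : ∀ x ≠ 0, Δ u x < 0) (huR : ∀ x, ‖x‖ = R → radialHarmonic a b x ≤ u x)
    (huS : ∀ x, ‖x‖ = S → radialHarmonic a b x ≤ u x) {x : E} (hx : ‖x‖ ∈ Icc R S) :
    radialHarmonic a b x ≤ u x := by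
  have hne : ∀ y : E, ‖y‖ ∈ Icc R S → y ≠ 0 := fun y hy => norm_pos_iff.1 (hR.trans_le hy.1)
  refine sub_nonneg.1 (nonneg_of_laplacian_neg_of_norm_mem_Icc (w := u - radialHarmonic a b)
    (fun y hy => contDiffAt_sub_radialHarmonic hu a b (hne y hy))
    (fun y hy => sub_nonneg.2 (huR y hy)) (fun y hy => sub_nonneg.2 (huS y hy))
    (fun y hy _ => ?_) hx)
  rw [laplacian_sub_radialHarmonic hu a b (hne y hy)]
  exact hΔ y (hne y hy)

theorem concaveOn_sphereMin_rpow (hn : 3 ≤ finrank ℝ E) (hu : ContDiffOn ℝ 2 u {0}ᶜ)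
    (hΔ : ∀ x ≠ 0, Δ u x < 0) :
    ConcaveOn ℝ (Ioi 0) fun s => sphereMin u (s ^ (2 - finrank ℝ E : ℝ)⁻¹) := by
  have : Nontrivial E := Module.nontrivial_of_finrank_pos (R := ℝ) (by omega)
  have hn' : (3 : ℝ) ≤ finrank ℝ E := by exact_mod_cast hn
  set q : ℝ := (2 - finrank ℝ E : ℝ)⁻¹
  have hq : q ≤ 0 := inv_nonpos.2 (by linarith)
  refine LinearOrder.concaveOn_of_lt (convex_Ioi 0)
    fun s (hs : 0 < s) t (ht : 0 < t) hst a b ha hb hab => ?_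
  simp only [smul_eq_mul]
  set A := (sphereMin u (t ^ q) - sphereMin u (s ^ q)) / (t - s)
  set B := sphereMin u (s ^ q) - A * s
  have hA : A * (t - s) = sphereMin u (t ^ q) - sphereMin u (s ^ q) :=
    div_mul_cancel₀ _ (sub_pos.2 hst).ne'
  have hrad : ∀ {σ : ℝ}, 0 < σ → ∀ z : E, ‖z‖ = σ ^ q → radialHarmonic A B z = A * σ + B :=
    fun hσ z hz => by
      rw [radialHarmonic, hz, Real.rpow_inv_rpow hσ.le (by linarith)]
  have hmin : ∀ {σ : ℝ}, 0 < σ → ∀ z : E, ‖z‖ = σ ^ q → sphereMin u (σ ^ q) ≤ u z :=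
    fun hσ z hz => hz ▸ sphereMin_le hu.continuousOn
      (norm_pos_iff.1 (hz ▸ Real.rpow_pos_of_pos hσ q))
  have hσ : 0 < a * s + b * t := by positivity
  obtain ⟨x, hx, hux⟩ := exists_norm_eq_and_eq_sphereMin hu.continuousOn
    (Real.rpow_pos_of_pos hσ q)
  have hle := radialHarmonic_le_of_norm_mem_Icc (a := A) (b := B) (Real.rpow_pos_of_pos ht q) hu hΔ
    (fun z hz => by rw [hrad ht z hz]; linarith [hmin ht z hz])
    (fun z hz => by rw [hrad hs z hz]; linarith [hmin hs z hz]) (x := x) <| by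
      rw [hx]
      exact ⟨Real.rpow_le_rpow_of_nonpos hσ (by nlinarith) hq,
        Real.rpow_le_rpow_of_nonpos hs (by nlinarith) hq⟩
  rw [hrad hσ x hx, hux] at hle
  refine le_trans (le_of_eq ?_) hle
  linear_combination B * hab - b * hA

lemma radialHarmonic_lt_of_le {a b : ℝ} (hu : ContDiffOn ℝ 2 u {0}ᶜ) (hΔ : ∀ x ≠ 0, Δ u x < 0)
    (hle : ∀ x ≠ 0, radialHarmonic a b x ≤ u x) {x : E} (hx : x ≠ 0) :
    radialHarmonic a b x < u x := by
  refine (hle x hx).lt_of_ne fun heq => (hΔ x hx).not_ge ?_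
  rw [← laplacian_sub_radialHarmonic hu a b hx]
  refine laplacian_nonneg_of_isLocalMin (contDiffAt_sub_radialHarmonic hu a b hx) ?_
  filter_upwards [isOpen_compl_singleton.mem_nhds hx] with y hy
  simpa [heq] using hle y hy

theorem exists_radialHarmonic_lt_and_tendsto_sphereMin (hn : 3 ≤ finrank ℝ E)
    (hu : ContDiffOn ℝ 2 u {0}ᶜ) (hpos : ∀ x ≠ 0, 0 < u x) (hΔ : ∀ x ≠ 0, Δ u x < 0) :
    ∃ a b : ℝ, 0 ≤ a ∧ 0 ≤ b ∧ (∀ x ≠ 0, radialHarmonic a b x < u x) ∧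
      Tendsto (fun r => r ^ (finrank ℝ E - 2 : ℝ) * sphereMin u r) (𝓝[>] 0) (𝓝 a) ∧
      Tendsto (sphereMin u) atTop (𝓝 b) := by
  have : Nontrivial E := Module.nontrivial_of_finrank_pos (R := ℝ) (by omega)
  have hn' : (3 : ℝ) ≤ finrank ℝ E := by exact_mod_cast hn
  have hradius : ∀ {r : ℝ}, 0 < r → (r ^ (2 - finrank ℝ E : ℝ)) ^ (2 - finrank ℝ E : ℝ)⁻¹ = r :=
    fun hr => Real.rpow_rpow_inv hr.le (by linarith)
  obtain ⟨a, b, ha, hb, hle, hlima, hlimb⟩ :=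
    exists_affine_le_and_tendsto_of_concaveOn (concaveOn_sphereMin_rpow hn hu hΔ) fun s hs => by
      obtain ⟨x, hx, hux⟩ := exists_norm_eq_and_eq_sphereMin hu.continuousOn
        (Real.rpow_pos_of_pos hs (2 - finrank ℝ E : ℝ)⁻¹)
      exact hux ▸ (hpos x (norm_pos_iff.1 (hx ▸ Real.rpow_pos_of_pos hs _))).le
  refine ⟨a, b, ha, hb, fun x hx => radialHarmonic_lt_of_le hu hΔ (fun y hy => ?_) hx, ?_, ?_⟩
  · have hy' := norm_pos_iff.2 hy
    have hy := (hle _ (Real.rpow_pos_of_pos hy' _)).trans_eq (congrArg _ (hradius hy'))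
    exact hy.trans (sphereMin_le hu.continuousOn ‹_›)
  · refine (hlima.comp
      (tendsto_rpow_neg_nhdsGT_zero (by linarith : (2 - finrank ℝ E : ℝ) < 0))).congr'
      ?_
    filter_upwards [self_mem_nhdsWithin] with r (hr : 0 < r)
    rw [Function.comp_apply, hradius hr, ← neg_sub, Real.rpow_neg hr.le, div_inv_eq_mul, mul_comm]
  · have hto0 : Tendsto (fun r : ℝ => r ^ (2 - finrank ℝ E : ℝ)) atTop (𝓝[>] 0) := by
      refine tendsto_nhdsWithin_iff.2 ⟨?_, ?_⟩
      · simpa using tendsto_rpow_neg_atTop (by linarith : (0 : ℝ) < finrank ℝ E - 2)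
      · filter_upwards [eventually_gt_atTop 0] with r hr using Real.rpow_pos_of_pos hr _
    refine (hlimb.comp hto0).congr' ?_
    filter_upwards [eventually_gt_atTop 0] with r hr
    rw [Function.comp_apply, hradius hr]

end SphereMin

section EndLimits

lemma eventually_preimage_norm_Icc_subset {E : Type*} [NormedAddCommGroup E] {s : Set E}
    {l : Filter ℝ} [TendstoIxxClass Icc l l] (hquarter : Tendsto (· / 4) l l)
    (hdouble : Tendsto (2 * ·) l l) (hs : s ∈ comap norm l) :
    ∀ᶠ r in l, norm ⁻¹' Icc (r / 4) (2 * r) ⊆ s := by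
  obtain ⟨t, ht, hts⟩ := mem_comap.1 hs
  filter_upwards [tendsto_smallSets_iff.1 (hquarter.Icc hdouble) t ht] with r hr
  exact (preimage_mono hr).trans hts

variable {E : Type*} [NormedAddCommGroup E] [InnerProductSpace ℝ E] [FiniteDimensional ℝ E]
  {p a b : ℝ} {u : E → ℝ} {s : Set E}

lemma sphereMin_sub_radialHarmonic [Nontrivial E] (hu : ContDiffOn ℝ 2 u {0}ᶜ) (a b : ℝ) {r : ℝ}
    (hr : 0 < r) : sphereMin (u - radialHarmonic a b) r =
      sphereMin u r - (a * r ^ (2 - finrank ℝ E : ℝ) + b) := by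
  have hv : ContinuousOn (u - radialHarmonic a b) {0}ᶜ := fun x hx =>
    (contDiffAt_sub_radialHarmonic hu a b hx).continuousAt.continuousWithinAt
  obtain ⟨x, rfl, hux⟩ := exists_norm_eq_and_eq_sphereMin hu.continuousOn hr
  obtain ⟨y, hy, hvy⟩ := exists_norm_eq_and_eq_sphereMin hv hr
  have hle := sphereMin_le hv (norm_pos_iff.1 hr)
  have hge := sphereMin_le hu.continuousOn (norm_pos_iff.1 (hy ▸ hr))
  simp only [Pi.sub_apply, radialHarmonic, hy] at hle hge hvy
  linarith

lemma isSingularSuperharmonicOn_sub_radialHarmonic {K : E → ℝ} (hp : 0 ≤ p)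
    (hu : ContDiffOn ℝ 2 u {0}ᶜ) (hΔ : ∀ x ≠ 0, Δ u x < 0) (ha : 0 ≤ a) (hb : 0 ≤ b)
    (hlt : ∀ x ≠ 0, radialHarmonic a b x < u x) (hK : ∀ x ∈ s, 0 ≤ K x)
    (hs : ∀ x ∈ s, x ≠ 0 ∧ -Δ u x ≤ K x * u x ^ (-p)) :
    IsSingularSuperharmonicOn p K (u - radialHarmonic a b) s where
  contDiffAt x hx := contDiffAt_sub_radialHarmonic hu a b (hs x hx).1
  pos x hx := sub_pos.2 (hlt x (hs x hx).1)
  laplacian_nonpos x hx := by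
    rw [laplacian_sub_radialHarmonic hu a b (hs x hx).1]
    exact (hΔ x (hs x hx).1).le
  neg_laplacian_le x hx := by
    rw [laplacian_sub_radialHarmonic hu a b (hs x hx).1]
    refine (hs x hx).2.trans (mul_le_mul_of_nonneg_left ?_ (hK x hx))
    refine Real.rpow_le_rpow_of_nonpos (sub_pos.2 (hlt x (hs x hx).1)) ?_ (neg_nonpos.2 hp)
    exact sub_le_self _ (by unfold radialHarmonic; positivity)

theorem tendsto_rpow_mul_comap_norm {l : Filter ℝ} [TendstoIxxClass Icc l l]
    (hl : ∀ᶠ r in l, 0 < r) (hquarter : Tendsto (· / 4) l l) (hdouble : Tendsto (2 * ·) l l)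
    {c e k L : ℝ} (hn : 2 ≤ finrank ℝ E) (hp : 0 < p) (hc : 0 < c) (hu : ContDiffOn ℝ 2 u {0}ᶜ)
    (h : IsSingularSuperharmonicOn p (fun z => c * ‖z‖ ^ e) (u - radialHarmonic a b) s)
    (hs : s ∈ comap norm l)
    (hmin : Tendsto (fun r => r ^ k * sphereMin u r) l (𝓝 L))
    (hrad : Tendsto (fun r => r ^ k * (a * r ^ (2 - finrank ℝ E : ℝ) + b)) l (𝓝 L))
    (hpow : Tendsto (fun r => r ^ (k + (2 + e) / (1 + p))) l (𝓝 0)) :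
    Tendsto (fun x => ‖x‖ ^ k * u x) (comap norm l) (𝓝 L) := by
  have : Nontrivial E := Module.nontrivial_of_finrank_pos (R := ℝ) (by omega)
  obtain ⟨A, D, hA⟩ := IsSingularSuperharmonicOn.exists_forall_le_mul_add_rpow hn hp hc e
  have hbound : Tendsto (fun r => A * (r ^ k * sphereMin u r -
      r ^ k * (a * r ^ (2 - finrank ℝ E : ℝ) + b) + D * r ^ (k + (2 + e) / (1 + p)))) l (𝓝 0) := by
    simpa using ((hmin.sub hrad).add (hpow.const_mul D)).const_mul A
  have hv : Tendsto (fun x => ‖x‖ ^ k * (u x - radialHarmonic a b x)) (comap norm l) (𝓝 0) := by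
    refine squeeze_zero' ?_ ?_ (hbound.comp tendsto_comap)
    · filter_upwards [hs] with x hx
      exact mul_nonneg (by positivity) (h.pos x hx).le
    · filter_upwards [tendsto_comap.eventually hl, tendsto_comap.eventually
        (eventually_preimage_norm_Icc_subset hquarter hdouble hs)] with x hx hann
      have hv : ContinuousOn (u - radialHarmonic a b) {0}ᶜ := fun x hx =>
        (contDiffAt_sub_radialHarmonic hu a b hx).continuousAt.continuousWithinAt
      obtain ⟨y, hy, hvy⟩ := exists_norm_eq_and_eq_sphereMin hv hx
      have hle := hA _ _ hx (h.mono hann fun _ _ => le_rfl) y x hy rfl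
      rw [hvy, sphereMin_sub_radialHarmonic hu a b hx] at hle
      calc ‖x‖ ^ k * (u x - radialHarmonic a b x)
          ≤ ‖x‖ ^ k * (A * (sphereMin u ‖x‖ - (a * ‖x‖ ^ (2 - finrank ℝ E : ℝ) + b) +
              D * ‖x‖ ^ ((2 + e) / (1 + p)))) := by gcongr; exact hle
        _ = _ := by
          rw [Function.comp_apply, Real.rpow_add hx]
          ring
  have hsum := hv.add (hrad.comp tendsto_comap)
  rw [zero_add] at hsum
  refine hsum.congr fun x => ?_
  simp only [Function.comp_apply, radialHarmonic]
  ring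

theorem tendsto_rpow_mul_nhdsNE_zero {c α : ℝ} (hn : 3 ≤ finrank ℝ E) (hp : 0 < p) (hc : 0 < c)
    (hα : 0 < finrank ℝ E + α + p * (finrank ℝ E - 2)) (hu : ContDiffOn ℝ 2 u {0}ᶜ)
    (h : IsSingularSuperharmonicOn p (fun z => c * ‖z‖ ^ α) (u - radialHarmonic a b) s)
    (hs : s ∈ 𝓝[≠] 0)
    (hmin : Tendsto (fun r => r ^ (finrank ℝ E - 2 : ℝ) * sphereMin u r) (𝓝[>] 0) (𝓝 a)) :
    Tendsto (fun x => ‖x‖ ^ (finrank ℝ E - 2 : ℝ) * u x) (𝓝[≠] 0) (𝓝 a) := by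
  have hn' : (3 : ℝ) ≤ finrank ℝ E := by exact_mod_cast hn
  have hpow : ∀ {y : ℝ}, 0 < y → Tendsto (fun r : ℝ => r ^ y) (𝓝[>] 0) (𝓝 0) := fun {y} hy => by
    simpa [hy.ne'] using ((tendsto_id (x := 𝓝 (0 : ℝ))).rpow_const (Or.inr hy.le)).mono_left
      nhdsWithin_le_nhds
  have hscale : ∀ {t : ℝ}, 0 < t → Tendsto (t * ·) (𝓝[>] 0) (𝓝[>] 0) := fun ht =>
    tendsto_iff_comap.2 (comap_mulLeft_nhdsGT_zero ht).ge
  have hrad : Tendsto (fun r : ℝ => r ^ (finrank ℝ E - 2 : ℝ) * (a * r ^ (2 - finrank ℝ E : ℝ) + b))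
      (𝓝[>] 0) (𝓝 a) := by
    have hlim := ((hpow (y := finrank ℝ E - 2) (by linarith)).mul_const b).const_add a
    rw [zero_mul, add_zero] at hlim
    refine hlim.congr' ?_
    filter_upwards [self_mem_nhdsWithin] with r hr
    rw [← neg_sub (finrank ℝ E : ℝ) 2, Real.rpow_neg (le_of_lt hr)]
    have := (Real.rpow_pos_of_pos hr (finrank ℝ E - 2 : ℝ)).ne'
    field_simp
  have hexp : (finrank ℝ E - 2 : ℝ) + (2 + α) / (1 + p) =
      (finrank ℝ E + α + p * (finrank ℝ E - 2)) / (1 + p) := by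
    field_simp
    ring
  rw [← comap_norm_nhdsGT_zero] at hs ⊢
  exact tendsto_rpow_mul_comap_norm (l := 𝓝[>] 0) self_mem_nhdsWithin
    (by simpa only [div_eq_inv_mul] using hscale (t := 4⁻¹) (by norm_num)) (hscale two_pos)
    (by omega) hp hc hu h hs hmin hrad (hpow (hexp ▸ by positivity))

theorem tendsto_cobounded_of_tendsto_sphereMin {c β : ℝ} (hn : 3 ≤ finrank ℝ E) (hp : 0 < p)
    (hc : 0 < c) (hβ : β < -2) (hu : ContDiffOn ℝ 2 u {0}ᶜ)
    (h : IsSingularSuperharmonicOn p (fun z => c * ‖z‖ ^ β) (u - radialHarmonic a b) s)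
    (hs : s ∈ cobounded E) (hmin : Tendsto (sphereMin u) atTop (𝓝 b)) :
    Tendsto u (cobounded E) (𝓝 b) := by
  have hn' : (3 : ℝ) ≤ finrank ℝ E := by exact_mod_cast hn
  have hpow : ∀ {y : ℝ}, y < 0 → Tendsto (fun r : ℝ => r ^ y) atTop (𝓝 0) := fun hy => by
    simpa using tendsto_rpow_neg_atTop (neg_pos.2 hy)
  have hrad : Tendsto (fun r : ℝ => a * r ^ (2 - finrank ℝ E : ℝ) + b) atTop (𝓝 b) := by
    simpa using ((hpow (y := 2 - finrank ℝ E) (by linarith)).const_mul a).add_const b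
  have hexp : (2 + β) / (1 + p) < 0 := div_neg_of_neg_of_pos (by linarith) (by linarith)
  rw [← comap_norm_atTop] at hs ⊢
  simpa using tendsto_rpow_mul_comap_norm (k := 0) (eventually_gt_atTop 0)
    (tendsto_id.atTop_div_const four_pos) (tendsto_id.const_mul_atTop two_pos) (by omega) hp hc hu
    h hs (by simpa using hmin) (by simpa using hrad) (by simpa using hpow hexp)

/-- The fundamental-solution coefficient `a` of `u` at the origin and its limit `b` at infinity. -/
def HasEndLimits (u : E → ℝ) (a b : ℝ) : Prop :=
  Tendsto (fun x => ‖x‖ ^ (finrank ℝ E - 2 : ℝ) * u x) (𝓝[≠] 0) (𝓝 a) ∧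
    Tendsto u (cobounded E) (𝓝 b)

theorem exists_hasEndLimits_of_neg_laplacian_le {c d α β : ℝ} (hn : 3 ≤ finrank ℝ E)
    (hp : 0 < p) (hc : 0 < c) (hd : 0 < d)
    (hα : 0 < finrank ℝ E + α + p * (finrank ℝ E - 2)) (hβ : β < -2)
    (hu : ContDiffOn ℝ 2 u {0}ᶜ) (hpos : ∀ x ≠ 0, 0 < u x) (hΔ : ∀ x ≠ 0, Δ u x < 0)
    (h0 : ∀ᶠ x in 𝓝[≠] 0, -Δ u x ≤ c * ‖x‖ ^ α * u x ^ (-p))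
    (hinf : ∀ᶠ x in cobounded E, -Δ u x ≤ d * ‖x‖ ^ β * u x ^ (-p)) :
    ∃ a b, 0 ≤ a ∧ 0 ≤ b ∧ HasEndLimits u a b := by
  obtain ⟨a, b, ha, hb, hlt, hlima, hlimb⟩ :=
    exists_radialHarmonic_lt_and_tendsto_sphereMin hn hu hpos hΔ
  have hsing {c : ℝ} (hc : 0 < c) (e : ℝ) : IsSingularSuperharmonicOn p (fun x => c * ‖x‖ ^ e)
      (u - radialHarmonic a b) {x | x ≠ 0 ∧ -Δ u x ≤ c * ‖x‖ ^ e * u x ^ (-p)} :=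
    isSingularSuperharmonicOn_sub_radialHarmonic hp.le hu hΔ ha hb hlt
      (fun x _ => by positivity) fun x hx => hx
  exact ⟨a, b, ha, hb,
    tendsto_rpow_mul_nhdsNE_zero hn hp hc hα hu (hsing hc α) (inter_mem self_mem_nhdsWithin h0)
      hlima,
    tendsto_cobounded_of_tendsto_sphereMin hn hp hd hβ hu (hsing hd β)
      (inter_mem (Bornology.isBounded_def.1 Bornology.isBounded_singleton) hinf) hlimb⟩

end EndLimits

section Solutions

variable {E : Type*} [NormedAddCommGroup E] [InnerProductSpace ℝ E] {φ : ℝ → ℝ}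
  {p a b : ℝ} {u v : E → ℝ}

lemma HasEndLimits.comp_linearIsometryEquiv (h : HasEndLimits u a b) (R : E ≃ₗᵢ[ℝ] E) :
    HasEndLimits (u ∘ R) a b := by
  refine ⟨?_, h.2.comp ?_⟩
  · have hR : Tendsto R (𝓝[≠] 0) (𝓝[≠] 0) := by
      simpa using R.continuous.continuousWithinAt.tendsto_nhdsWithin (x := 0)
        (s := {0}ᶜ) (t := {0}ᶜ) (by simp [MapsTo])
    simpa only [Function.comp_def, R.norm_map] using h.1.comp hR
  · simpa only [← comap_norm_atTop, tendsto_comap_iff, Function.comp_def, R.norm_map] using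
      tendsto_comap

variable [FiniteDimensional ℝ E]

/-- `u` is a positive classical solution of `-Δu = φ(|x|) u^{-p}` on the punctured space; its value
at the origin is irrelevant. -/
structure IsPositiveSolution (φ : ℝ → ℝ) (p : ℝ) (u : E → ℝ) : Prop where
  contDiffOn : ContDiffOn ℝ 2 u {0}ᶜ
  pos : ∀ x ≠ 0, 0 < u x
  neg_laplacian_eq : ∀ x ≠ 0, -Δ u x = φ ‖x‖ * u x ^ (-p)

namespace IsPositiveSolution

lemma contDiffAt (hu : IsPositiveSolution φ p u) {x : E} (hx : x ≠ 0) : ContDiffAt ℝ 2 u x :=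
  hu.contDiffOn.contDiffAt (isOpen_compl_singleton.mem_nhds hx)

lemma laplacian_neg (hφ : ∀ r, 0 < r → 0 < φ r) (hu : IsPositiveSolution φ p u) {x : E}
    (hx : x ≠ 0) : Δ u x < 0 := by
  rw [← neg_pos, hu.neg_laplacian_eq x hx]
  exact mul_pos (hφ _ (norm_pos_iff.2 hx)) (Real.rpow_pos_of_pos (hu.pos x hx) _)

lemma comp_linearIsometryEquiv (hu : IsPositiveSolution φ p u) (R : E ≃ₗᵢ[ℝ] E) :
    IsPositiveSolution φ p (u ∘ R) where
  contDiffOn x hx :=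
    ((hu.contDiffAt (by simpa using hx)).comp x R.contDiff.contDiffAt).contDiffWithinAt
  pos x hx := hu.pos _ (by simpa using hx)
  neg_laplacian_eq x hx := by
    rw [laplacian_comp_linearIsometryEquiv, hu.neg_laplacian_eq _ (by simpa using hx), R.norm_map,
      Function.comp_apply]

lemma laplacian_lt_of_lt (hp : 0 < p) (hφ : ∀ r, 0 < r → 0 < φ r)
    (hu : IsPositiveSolution φ p u) (hv : IsPositiveSolution φ p v) {x : E} (hx : x ≠ 0)
    (h : v x < u x) : Δ v x < Δ u x := by
  rw [← neg_lt_neg_iff, hu.neg_laplacian_eq x hx, hv.neg_laplacian_eq x hx]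
  exact mul_lt_mul_of_pos_left (Real.rpow_lt_rpow_of_neg (hv.pos x hx) h (neg_neg_of_pos hp))
    (hφ _ (norm_pos_iff.2 hx))

lemma sub_le_radialHarmonic_of_hasEndLimits (hp : 0 < p) (hφ : ∀ r, 0 < r → 0 < φ r)
    (hu : IsPositiveSolution φ p u) (hv : IsPositiveSolution φ p v) (hua : HasEndLimits u a b)
    (hva : HasEndLimits v a b) {ε : ℝ} (hε : 0 < ε) {x : E} (hx : x ≠ 0) :
    u x - v x ≤ radialHarmonic ε ε x := by
  have hvu : ContDiffOn ℝ 2 (v - u) {0}ᶜ := hv.contDiffOn.sub hu.contDiffOn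
  have hw (y : E) : (v - u - radialHarmonic (-ε) (-ε) : E → ℝ) y =
      v y - u y + (ε * ‖y‖ ^ (2 - finrank ℝ E : ℝ) + ε) := by
    simp only [Pi.sub_apply, radialHarmonic]
    ring
  have hpow (y : E) : 0 ≤ ε * ‖y‖ ^ (2 - finrank ℝ E : ℝ) := by positivity
  have hnonneg := nonneg_of_laplacian_neg_of_ne_zero (w := v - u - radialHarmonic (-ε) (-ε))
    (fun y hy => (contDiffAt_sub_radialHarmonic hvu _ _ hy).contDiffWithinAt) ?_ ?_
    (fun y hy hneg => ?_) hx
  · rw [hw] at hnonneg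
    unfold radialHarmonic
    linarith
  · have hlim := hva.1.sub hua.1
    rw [sub_self] at hlim
    filter_upwards [hlim.eventually_const_lt (neg_neg_of_pos hε), self_mem_nhdsWithin]
      with y hlt hy
    have hscale : 0 < ‖y‖ ^ (finrank ℝ E - 2 : ℝ) := Real.rpow_pos_of_pos (norm_pos_iff.2 hy) _
    refine nonneg_of_mul_nonneg_right ?_ hscale
    rw [hw, ← neg_sub (finrank ℝ E : ℝ) 2, Real.rpow_neg (norm_nonneg y), mul_add, mul_add,
      mul_left_comm, mul_inv_cancel₀ hscale.ne']
    linarith [mul_pos hscale hε]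
  · have hlim := hva.2.sub hua.2
    rw [sub_self] at hlim
    filter_upwards [hlim.eventually_const_lt (neg_neg_of_pos hε)] with y hlt
    rw [hw]
    linarith [hpow y]
  · rw [laplacian_sub_radialHarmonic hvu _ _ hy,
      (hv.contDiffAt hy).laplacian_sub (hu.contDiffAt hy), sub_neg]
    refine laplacian_lt_of_lt hp hφ hu hv hy ?_
    rw [hw] at hneg
    linarith [hpow y]

theorem le_of_hasEndLimits (hp : 0 < p) (hφ : ∀ r, 0 < r → 0 < φ r)
    (hu : IsPositiveSolution φ p u) (hv : IsPositiveSolution φ p v) (hua : HasEndLimits u a b)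
    (hva : HasEndLimits v a b) {x : E} (hx : x ≠ 0) : u x ≤ v x := by
  have hcont : Continuous fun ε => radialHarmonic ε ε x := by
    unfold radialHarmonic
    fun_prop
  have hlim : Tendsto (fun ε => radialHarmonic ε ε x) (𝓝[>] 0) (𝓝 0) := by
    simpa [radialHarmonic] using (hcont.tendsto 0).mono_left nhdsWithin_le_nhds
  refine sub_nonpos.1 (ge_of_tendsto hlim ?_)
  filter_upwards [self_mem_nhdsWithin] with ε hε
  exact sub_le_radialHarmonic_of_hasEndLimits hp hφ hu hv hua hva hε hx

theorem eq_of_hasEndLimits (hp : 0 < p) (hφ : ∀ r, 0 < r → 0 < φ r)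
    (hu : IsPositiveSolution φ p u) (hv : IsPositiveSolution φ p v) (hua : HasEndLimits u a b)
    (hva : HasEndLimits v a b) {x : E} (hx : x ≠ 0) : u x = v x :=
  (le_of_hasEndLimits hp hφ hu hv hua hva hx).antisymm
    (le_of_hasEndLimits hp hφ hv hu hva hua hx)

theorem eq_of_norm_eq (hp : 0 < p) (hφ : ∀ r, 0 < r → 0 < φ r) (hu : IsPositiveSolution φ p u)
    (hua : HasEndLimits u a b) {x y : E} (hx : x ≠ 0) (hxy : ‖x‖ = ‖y‖) : u x = u y := by
  have h := eq_of_hasEndLimits hp hφ hu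
    (hu.comp_linearIsometryEquiv (Submodule.span ℝ {x - y})ᗮ.reflection) hua
    (hua.comp_linearIsometryEquiv _) hx
  rwa [Function.comp_apply, Submodule.reflection_sub hxy] at h

theorem exists_hasEndLimits {α β : ℝ} (hn : 3 ≤ finrank ℝ E) (hp : 0 < p)
    (hα : 0 < finrank ℝ E + α + p * (finrank ℝ E - 2)) (hβ : β < -2)
    (hφ : ∀ r, 0 < r → 0 < φ r) (h0 : φ =O[𝓝[>] 0] (· ^ α)) (hinf : φ =O[atTop] (· ^ β))
    (hu : IsPositiveSolution φ p u) : ∃ a b, 0 ≤ a ∧ 0 ≤ b ∧ HasEndLimits u a b := by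
  obtain ⟨c, hc, h0⟩ := h0.exists_pos
  obtain ⟨d, hd, hinf⟩ := hinf.exists_pos
  have hle {e c : ℝ} {x : E} (hx : x ≠ 0) (h : ‖φ ‖x‖‖ ≤ c * ‖‖x‖ ^ e‖) :
      -Δ u x ≤ c * ‖x‖ ^ e * u x ^ (-p) := by
    rw [Real.norm_of_nonneg (by positivity : 0 ≤ ‖x‖ ^ e)] at h
    rw [hu.neg_laplacian_eq x hx]
    exact mul_le_mul_of_nonneg_right ((Real.le_norm_self _).trans h)
      (Real.rpow_nonneg (hu.pos x hx).le _)
  refine exists_hasEndLimits_of_neg_laplacian_le hn hp hc hd hα hβ hu.contDiffOn hu.pos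
    (fun x => hu.laplacian_neg hφ) ?_ ?_
  · filter_upwards [tendsto_norm_nhdsNE_zero.eventually h0.bound, self_mem_nhdsWithin] with x h hx
      using hle hx h
  · filter_upwards [tendsto_norm_cobounded_atTop.eventually hinf.bound,
      Bornology.isBounded_def.1 (Bornology.isBounded_singleton (x := (0 : E)))] with x h hx
      using hle hx h

end IsPositiveSolution

theorem statement_15_general {α β : ℝ} (hn : 3 ≤ finrank ℝ E) (hp : 0 < p)
    (hα : 0 < finrank ℝ E + α + p * (finrank ℝ E - 2)) (hβ : β < -2)
    (hφ : ∀ r, 0 < r → 0 < φ r) (h0 : φ =O[𝓝[>] 0] (· ^ α)) (hinf : φ =O[atTop] (· ^ β)) :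
    (∀ u : E → ℝ, IsPositiveSolution φ p u →
      (∀ x y, x ≠ 0 → y ≠ 0 → ‖x‖ = ‖y‖ → u x = u y) ∧
        ∃ a b, 0 ≤ a ∧ 0 ≤ b ∧ HasEndLimits u a b) ∧
    ∀ u v : E → ℝ, IsPositiveSolution φ p u → IsPositiveSolution φ p v →
      ∀ a b, HasEndLimits u a b → HasEndLimits v a b → ∀ x, x ≠ 0 → u x = v x := by
  refine ⟨fun u hu => ?_, fun u v hu hv a b hua hva x hx =>
    hu.eq_of_hasEndLimits hp hφ hv hua hva hx⟩
  obtain ⟨a, b, ha, hb, hab⟩ := hu.exists_hasEndLimits hn hp hα hβ hφ h0 hinf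
  exact ⟨fun x y hx _ hxy => hu.eq_of_norm_eq hp hφ hab hx hxy, a, b, ha, hb, hab⟩

end Solutions

section EuclideanSpace

variable {N : ℕ}

lemma laplacian_eq (u : EuclideanSpace ℝ (Fin N) → ℝ) : laplacian u = Δ u := by
  rw [InnerProductSpace.laplacian_eq_iteratedFDeriv_orthonormalBasis u
    (EuclideanSpace.basisFun (Fin N) ℝ)]
  funext x
  simp [laplacian]

lemma isSol_iff_isPositiveSolution {φ : ℝ → ℝ} {p : ℝ} {u : EuclideanSpace ℝ (Fin N) → ℝ} :
    IsSol φ p u ↔ IsPositiveSolution φ p u := by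
  rw [IsSol, laplacian_eq]
  exact ⟨fun h => ⟨h.1, fun x hx => (h.2 x hx).1, fun x hx => (h.2 x hx).2⟩,
    fun h => ⟨h.contDiffOn, fun x hx => ⟨h.pos x hx, h.neg_laplacian_eq x hx⟩⟩⟩

lemma hasEndLimits_euclideanSpace_iff {a b : ℝ} {u : EuclideanSpace ℝ (Fin N) → ℝ} :
    HasEndLimits u a b ↔ Tendsto (fun x => ‖x‖ ^ (N - 2 : ℝ) * u x) (𝓝[≠] 0) (𝓝 a) ∧
      Tendsto u (cocompact (EuclideanSpace ℝ (Fin N))) (𝓝 b) := by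
  rw [HasEndLimits, finrank_euclideanSpace_fin, cobounded_eq_cocompact]

end EuclideanSpace

lemma isBigO_of_forall_mem_le {l : Filter ℝ} {s : Set ℝ} {f g : ℝ → ℝ} (c : ℝ) (hs : s ∈ l)
    (hf : ∀ r ∈ s, 0 ≤ f r) (hg : ∀ r ∈ s, f r ≤ c * g r) : f =O[l] g := by
  refine IsBigO.of_bound |c| ?_
  filter_upwards [hs] with r hr
  rw [Real.norm_of_nonneg (hf r hr), Real.norm_eq_abs, ← abs_mul]
  exact (hg r hr).trans (le_abs_self _)

/-- Theorem 4.2 (ii): every solution is radially symmetric, has finite nonnegative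
limits `a = lim_{|x|→0} |x|^{N-2} u(x)` and `b = lim_{|x|→∞} u(x)`, and two solutions
with the same limits coincide. -/
theorem statement_15 {N : ℕ} (hN : 3 ≤ N) (p : ℝ) (hp : 0 < p) (α β : ℝ)
    (haabb : 0 < (N:ℝ) + α + p * ((N:ℝ) - 2)) (hβ2 : β < -2)
    (γ : NNReal) (hγ0 : 0 < γ) (hγ1 : γ < 1) (φ : ℝ → ℝ)
    (hφpos : ∀ r : ℝ, 0 < r → 0 < φ r)
    (hφhold : ∀ s : Set ℝ, IsCompact s → s ⊆ Ioi (0:ℝ) → ∃ C : NNReal, HolderOnWith C γ φ s)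
    (c₁ c₂ : ℝ) (hc₁ : 0 < c₁) (hc₂ : 0 < c₂)
    (hα : ∀ r : ℝ, 0 < r → r < 1 → c₁ * r ^ α ≤ φ r ∧ φ r ≤ c₂ * r ^ α)
    (hβ : ∀ r : ℝ, 1 < r → c₁ * r ^ β ≤ φ r ∧ φ r ≤ c₂ * r ^ β) :
    (∀ u : EuclideanSpace ℝ (Fin N) → ℝ, IsSol φ p u →
      (∀ x y : EuclideanSpace ℝ (Fin N), x ≠ 0 → y ≠ 0 → ‖x‖ = ‖y‖ → u x = u y) ∧
      ∃ a b : ℝ, 0 ≤ a ∧ 0 ≤ b ∧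
        Tendsto (fun x : EuclideanSpace ℝ (Fin N) => ‖x‖ ^ ((N:ℝ) - 2) * u x)
          (nhdsWithin (0 : EuclideanSpace ℝ (Fin N)) {0}ᶜ) (nhds a) ∧
        Tendsto u (Filter.cocompact (EuclideanSpace ℝ (Fin N))) (nhds b)) ∧
    (∀ u v : EuclideanSpace ℝ (Fin N) → ℝ, IsSol φ p u → IsSol φ p v →
      ∀ a b : ℝ,
        Tendsto (fun x : EuclideanSpace ℝ (Fin N) => ‖x‖ ^ ((N:ℝ) - 2) * u x)
          (nhdsWithin (0 : EuclideanSpace ℝ (Fin N)) {0}ᶜ) (nhds a) →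
        Tendsto u (Filter.cocompact (EuclideanSpace ℝ (Fin N))) (nhds b) →
        Tendsto (fun x : EuclideanSpace ℝ (Fin N) => ‖x‖ ^ ((N:ℝ) - 2) * v x)
          (nhdsWithin (0 : EuclideanSpace ℝ (Fin N)) {0}ᶜ) (nhds a) →
        Tendsto v (Filter.cocompact (EuclideanSpace ℝ (Fin N))) (nhds b) →
        ∀ x : EuclideanSpace ℝ (Fin N), x ≠ 0 → u x = v x) := by
  have h0 : φ =O[𝓝[>] 0] (· ^ α) := isBigO_of_forall_mem_le c₂ (Ioo_mem_nhdsGT one_pos)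
    (fun r hr => (hφpos r hr.1).le) fun r hr => (hα r hr.1 hr.2).2
  have hinf : φ =O[atTop] (· ^ β) := isBigO_of_forall_mem_le c₂ (Ioi_mem_atTop 1)
    (fun r hr => (hφpos r (one_pos.trans hr)).le) fun r hr => (hβ r hr).2
  have h := statement_15_general (E := EuclideanSpace ℝ (Fin N)) (by simpa using hN) hp
    (by simpa using haabb) hβ2 hφpos h0 hinf
  simpa only [isSol_iff_isPositiveSolution, hasEndLimits_euclideanSpace_iff, and_imp] using h
end
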